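/- arXiv:0902.3953 — 2 statements merged into one kernel-verified Lean document; each statement's English description precedes it below -/
import Mathlib

section
/- Let q ≥ 3 and let x, y ∈ ℝ each admit an infinite regular λ_q-CF. Then x and y are G_q-equivalent if and only if one of the following holds: (i) x and y admit infinite regular λ_q-CF expansions whose digit sequences have a common tail; (ii) x admits an infinite regular λ_q-CF expansion whose digit sequence has a common tail with ρ_q and y admits one whose digit sequence has a common tail with −ρ_q; (iii) the same as (ii) with the roles of x and y interchanged. -/
open Filter Topology

/-- `λ_q = 2 cos (π/q)`. -/
noncomputable def lamq (q : ℕ) : ℝ := 2 * Real.cos (Real.pi / q)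

/-- `h_q = (q-2)/2` for even `q` and `(q-3)/2` for odd `q`. -/
def hQ (q : ℕ) : ℕ := if Even q then (q - 2) / 2 else (q - 3) / 2

/-- Forbidden blocks for the nearest `λ_q`-multiple continued fractions.
For `ε ∈ {1,-1}`: the block `(ε)^{h_q+1}`; for even `q` the blocks `((ε)^{h_q}, ε·m)`, `m ≥ 1`;
for odd `q` (including `q = 3`, where `h_q = 0`) the blocks `((ε)^{h_q}, ε·2, (ε)^{h_q}, ε·m)`,
`m ≥ 1`. -/
def IsForbidden (q : ℕ) (L : List ℤ) : Prop :=
  ∃ ε : ℤ, (ε = 1 ∨ ε = -1) ∧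
    (L = List.replicate (hQ q + 1) ε ∨
      (if Even q then
        ∃ m : ℤ, 1 ≤ m ∧ L = List.replicate (hQ q) ε ++ [ε * m]
      else
        ∃ m : ℤ, 1 ≤ m ∧
          L = List.replicate (hQ q) ε ++ ε * 2 :: (List.replicate (hQ q) ε ++ [ε * m])))

/-- An infinite sequence is `q`-regular if no finite subblock is forbidden. -/
def RegularSeq (q : ℕ) (a : ℕ → ℤ) : Prop :=
  ∀ (l len : ℕ), ¬ IsForbidden q (List.ofFn fun j : Fin len => a (l + (j : ℕ)))

/-- An infinite sequence is dual `q`-regular if no reversed finite subblock is forbidden. -/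
def DualRegularSeq (q : ℕ) (a : ℕ → ℤ) : Prop :=
  ∀ (l len : ℕ), ¬ IsForbidden q (List.ofFn fun j : Fin len => a (l + (j : ℕ))).reverse

/-- A finite sequence is `q`-regular if no contiguous subblock is forbidden. -/
def RegularList (q : ℕ) (L : List ℤ) : Prop :=
  ∀ B : List ℤ, B <:+: L → ¬ IsForbidden q B

/-- Numerators of the convergents: `p₀ = a₀λ`, `p₁ = a₁λ·p₀ - 1`,
`pₙ = aₙλ·pₙ₋₁ - pₙ₋₂` (so that `p₋₁ = 1`, `p₋₂ = 0`).  Here `A n` is the digit `aₙ`. -/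
noncomputable def cfP (lam : ℝ) (A : ℕ → ℤ) : ℕ → ℝ
  | 0 => (A 0 : ℝ) * lam
  | 1 => (A 1 : ℝ) * lam * ((A 0 : ℝ) * lam) - 1
  | (n + 2) => (A (n + 2) : ℝ) * lam * cfP lam A (n + 1) - cfP lam A n

/-- Denominators of the convergents: `q₀ = 1`, `q₁ = a₁λ`,
`qₙ = aₙλ·qₙ₋₁ - qₙ₋₂` (so that `q₋₁ = 0`, `q₋₂ = -1`). -/
noncomputable def cfQ (lam : ℝ) (A : ℕ → ℤ) : ℕ → ℝ
  | 0 => 1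
  | 1 => (A 1 : ℝ) * lam
  | (n + 2) => (A (n + 2) : ℝ) * lam * cfQ lam A (n + 1) - cfQ lam A n

/-- The λ-continued fraction with digit sequence `A` converges to `x`. -/
def CFConvergesTo (lam : ℝ) (A : ℕ → ℤ) (x : ℝ) : Prop :=
  (∀ n, cfQ lam A n ≠ 0) ∧
    Filter.Tendsto (fun n => cfP lam A n / cfQ lam A n) Filter.atTop (nhds x)

/-- The value `p_L/q_L` of the finite continued fraction `[a₀; a₁, …, a_L]`. -/
noncomputable def cfValList (lam : ℝ) (a0 : ℤ) (L : List ℤ) : ℝ :=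
  cfP lam (fun i => (a0 :: L).getD i 0) L.length /
    cfQ lam (fun i => (a0 :: L).getD i 0) L.length

/-- The last denominator `q_L` of the finite continued fraction `[a₀; a₁, …, a_L]`. -/
noncomputable def cfDenList (lam : ℝ) (a0 : ℤ) (L : List ℤ) : ℝ :=
  cfQ lam (fun i => (a0 :: L).getD i 0) L.length

/-- The modified floor: `⌊t⌋* = ⌈t⌉ - 1` for `t > 0` and `⌊t⌋* = ⌊t⌋` for `t ≤ 0`. -/
noncomputable def floorstar (t : ℝ) : ℤ := if 0 < t then ⌈t⌉ - 1 else ⌊t⌋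

/-- The nearest `λ`-multiple: `⟨y⟩ = ⌊y/λ + 1/2⌋*`. -/
noncomputable def nearestLam (lam : ℝ) (x : ℝ) : ℤ := floorstar (x / lam + 1 / 2)

/-- The interval map `f_q` on `I_q = [-λ/2, λ/2]`. -/
noncomputable def fq (lam : ℝ) (x : ℝ) : ℝ :=
  if x = 0 then 0 else -1 / x - (nearestLam lam (-1 / x) : ℝ) * lam

/-- `R_q`: equal to `1` for even `q`, and the positive root of `R² + (2-λ_q)R = 1` for odd `q`. -/
noncomputable def Rq (q : ℕ) : ℝ :=
  if Even q then 1 else (lamq q - 2 + Real.sqrt ((2 - lamq q) ^ 2 + 4)) / 2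

/-- `r_q = R_q - λ_q`. -/
noncomputable def rq (q : ℕ) : ℝ := Rq q - lamq q

/-- The map `⟨·⟩*` used by the dual algorithm. -/
noncomputable def nearestDual (lam R y : ℝ) : ℤ :=
  if 0 ≤ y then floorstar (y / lam + 1 - R / lam) else floorstar (y / lam + R / lam)

/-- The dual interval map `f_q^*` on `I_{R_q} = [-R_q, R_q]`. -/
noncomputable def fqstar (lam R : ℝ) (x : ℝ) : ℝ :=
  if x = 0 then 0 else -1 / x - (nearestDual lam R (-1 / x) : ℝ) * lam

/-- The matrix `S = [[0,-1],[1,0]]` as an element of `SL(2,ℝ)`. -/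
noncomputable def matS : Matrix.SpecialLinearGroup (Fin 2) ℝ :=
  ⟨!![0, -1; 1, 0], by norm_num [Matrix.det_fin_two_of]⟩

/-- The matrix `T = [[1,λ],[0,1]]` as an element of `SL(2,ℝ)`. -/
noncomputable def matT (lam : ℝ) : Matrix.SpecialLinearGroup (Fin 2) ℝ :=
  ⟨!![1, lam; 0, 1], by norm_num [Matrix.det_fin_two_of]⟩

/-- The Hecke triangle group `G_q`, the subgroup of `SL(2,ℝ)` generated by `S` and `T_q`. -/
noncomputable def Hecke (q : ℕ) : Subgroup (Matrix.SpecialLinearGroup (Fin 2) ℝ) :=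
  Subgroup.closure {matS, matT (lamq q)}

/-- The Möbius action of `g` on `x ∈ ℝ`. -/
noncomputable def moeb (g : Matrix.SpecialLinearGroup (Fin 2) ℝ) (x : ℝ) : ℝ :=
  (g.val 0 0 * x + g.val 0 1) / (g.val 1 0 * x + g.val 1 1)

/-- `x` and `y` are `G_q`-equivalent. -/
def GqEquiv (q : ℕ) (x y : ℝ) : Prop :=
  ∃ g ∈ Hecke q, (g.val 1 0 * x + g.val 1 1 ≠ 0) ∧ moeb g x = y

/-- Two sequences have a common tail. -/
def CommonTail (a b : ℕ → ℤ) : Prop := ∃ m n : ℕ, ∀ k : ℕ, a (m + k) = b (n + k)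

/-- The period block of `ρ_q`: `(3)` for `q = 3`, `((1)^{h_q-1}, 2)` for even `q`
and `((1)^{h_q}, 2, (1)^{h_q-1}, 2)` for odd `q ≥ 5`. -/
def rhoBlock (q : ℕ) : List ℤ :=
  if q = 3 then [3]
  else if Even q then List.replicate (hQ q - 1) 1 ++ [2]
  else List.replicate (hQ q) 1 ++ 2 :: (List.replicate (hQ q - 1) 1 ++ [2])

/-- The periodic sequence `ρ_q`. -/
def rho (q : ℕ) (i : ℕ) : ℤ := (rhoBlock q).getD (i % (rhoBlock q).length) 0

/-- `x` has the infinite regular `λ_q`-CF with digit sequence `A` (with `A 0 = a₀`). -/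
def HasRegCF (q : ℕ) (x : ℝ) (A : ℕ → ℤ) : Prop :=
  (∀ i, A (i + 1) ≠ 0) ∧ RegularSeq q (fun i => A (i + 1)) ∧ CFConvergesTo (lamq q) A x

/-- `x` has the infinite dual regular `λ_q`-CF with digit sequence `A` (with `A 0 = a₀`). -/
def HasDualRegCF (q : ℕ) (x : ℝ) (A : ℕ → ℤ) : Prop :=
  (∀ i, A (i + 1) ≠ 0) ∧ DualRegularSeq q (fun i => A (i + 1)) ∧ CFConvergesTo (lamq q) A x

/-- The digits of `x` produced by the algorithm for `f_q`: `a_{i+1} = ⟨-1 / f_q^i(x)⟩`. -/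
noncomputable def digitSeq (lam : ℝ) (x : ℝ) : ℕ → ℤ :=
  fun i => nearestLam lam (-1 / (fq lam)^[i] x)

/-- The digits of `x` produced by the algorithm for `f_q^*`: `b_{i+1} = ⟨-1 / (f_q^*)^i(x)⟩*`. -/
noncomputable def digitSeqStar (lam R : ℝ) (x : ℝ) : ℕ → ℤ :=
  fun i => nearestDual lam R (-1 / (fqstar lam R)^[i] x)


/-! ## The numbers `s_k = sin (kπ/q) / sin (π/q)` -/

noncomputable def sg (q : ℕ) (k : ℕ) : ℝ := Real.sin (k * (Real.pi / q)) / Real.sin (Real.pi / q)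

lemma sin_pos_q {q : ℕ} (hq : 3 ≤ q) {k : ℕ} (hk : 0 < k) (hkq : k < q) :
    0 < Real.sin (k * (Real.pi / q)) := by
  have hq0 : (0:ℝ) < q := by exact_mod_cast (by omega : 0 < q)
  have hk0 : (0:ℝ) < k := by exact_mod_cast hk
  have hkq' : (k:ℝ) < q := by exact_mod_cast hkq
  apply Real.sin_pos_of_pos_of_lt_pi
  · have := Real.pi_pos; positivity
  · rw [← mul_div_assoc, div_lt_iff₀ hq0, mul_comm]
    exact mul_lt_mul_of_pos_left hkq' Real.pi_pos

lemma sin_pos_q1 {q : ℕ} (hq : 3 ≤ q) : 0 < Real.sin (Real.pi / q) := by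
  simpa using sin_pos_q hq (k := 1) one_pos (by omega)

lemma sg_zero (q : ℕ) : sg q 0 = 0 := by simp [sg]

lemma sg_one {q : ℕ} (hq : 3 ≤ q) : sg q 1 = 1 := by
  simp [sg, (sin_pos_q1 hq).ne']

lemma sg_rec {q : ℕ} (k : ℕ) : sg q (k + 2) = lamq q * sg q (k + 1) - sg q k := by
  unfold sg lamq
  have : Real.sin (((k + 2 : ℕ) : ℝ) * (Real.pi / q)) =
      2 * Real.cos (Real.pi / q) * Real.sin (((k + 1 : ℕ) : ℝ) * (Real.pi / q))
        - Real.sin ((k : ℝ) * (Real.pi / q)) := by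
    have e1 : ((k + 2 : ℕ) : ℝ) * (Real.pi / q) =
      ((k + 1 : ℕ) : ℝ) * (Real.pi / q) + Real.pi / q := by push_cast; ring
    have e2 : (k : ℝ) * (Real.pi / q) =
      ((k + 1 : ℕ) : ℝ) * (Real.pi / q) - Real.pi / q := by push_cast; ring
    rw [e1, e2, Real.sin_add, Real.sin_sub]; ring
  rw [this]; ring

lemma sg_pos {q : ℕ} (hq : 3 ≤ q) {k : ℕ} (hk : 0 < k) (hkq : k < q) : 0 < sg q k :=
  div_pos (sin_pos_q hq hk hkq) (sin_pos_q1 hq)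

lemma sg_refl {q : ℕ} (hq : 3 ≤ q) {k l : ℕ} (hkl : k + l = q) : sg q k = sg q l := by
  unfold sg
  have hq0 : (q:ℝ) ≠ 0 := by exact_mod_cast (by omega : q ≠ 0)
  have : (k : ℝ) * (Real.pi / q) = Real.pi - l * (Real.pi / q) := by
    have : (k : ℝ) = q - l := by rw [← hkl]; push_cast; ring
    rw [this]; field_simp
  rw [this, Real.sin_pi_sub]

lemma lamq_lt_two {q : ℕ} (hq : 3 ≤ q) : lamq q < 2 := by
  unfold lamq
  have hq0 : (0:ℝ) < q := by exact_mod_cast (by omega : 0 < q)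
  have h1 : Real.cos (Real.pi / q) < Real.cos 0 := by
    apply Real.cos_lt_cos_of_nonneg_of_le_pi le_rfl
    · apply div_le_self Real.pi_pos.le; exact_mod_cast (by omega : 1 ≤ q)
    · have := Real.pi_pos; positivity
  rw [Real.cos_zero] at h1; linarith

lemma one_le_lamq {q : ℕ} (hq : 3 ≤ q) : 1 ≤ lamq q := by
  unfold lamq
  have hq0 : (3:ℝ) ≤ q := by exact_mod_cast hq
  have h1 : Real.cos (Real.pi / 3) ≤ Real.cos (Real.pi / q) := by
    have := Real.pi_pos
    apply Real.cos_le_cos_of_nonneg_of_le_pi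
    · positivity
    · linarith
    · gcongr
  rw [Real.cos_pi_div_three] at h1; linarith

/-! ## Infinite nearest-multiple orbits -/

/-- `A` is the digit sequence of an infinite nearest-`λ`-multiple orbit of `x`. -/
def Orb (lam : ℝ) (x : ℝ) (A : ℕ → ℤ) : Prop :=
  ∃ X : ℕ → ℝ, X 0 = x ∧ ∀ n, |X n - A n * lam| ≤ lam / 2 ∧ X n ≠ A n * lam ∧
    X (n + 1) = -1 / (X n - A n * lam)

lemma Orb_iff {lam x : ℝ} {A : ℕ → ℤ} : Orb lam x A ↔
    |x - A 0 * lam| ≤ lam / 2 ∧ x ≠ A 0 * lam ∧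
      Orb lam (-1 / (x - A 0 * lam)) (fun n => A (n + 1)) := by
  constructor
  · rintro ⟨X, h0, h⟩
    have h1 := h 0
    rw [h0] at h1
    exact ⟨h1.1, h1.2.1, fun n => X (n + 1), h1.2.2, fun n => h (n + 1)⟩
  · rintro ⟨h1, h2, X, h0, h⟩
    refine ⟨fun n => Nat.casesOn n x X, rfl, ?_⟩
    intro n
    cases n with
    | zero => exact ⟨h1, h2, h0⟩
    | succ n => exact h n

lemma Orb_neg {lam x : ℝ} {A : ℕ → ℤ} (h : Orb lam x A) : Orb lam (-x) (fun n => -A n) := by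
  obtain ⟨X, h0, h⟩ := h
  refine ⟨fun n => -X n, by simp [h0], fun n => ?_⟩
  obtain ⟨h1, h2, h3⟩ := h n
  refine ⟨?_, ?_, ?_⟩
  · rw [← abs_neg]; convert h1 using 2; push_cast; ring
  · intro h4; apply h2; push_cast at h4; linarith
  · simp only [h3]; push_cast
    rw [show -X n - -(A n : ℝ) * lam = -(X n - A n * lam) by ring, div_neg]

/-- Change the leading digit. -/
def upd (A : ℕ → ℤ) (k : ℤ) : ℕ → ℤ := fun n => if n = 0 then A 0 + k else A n

lemma Orb_shift {lam x : ℝ} {A : ℕ → ℤ} (h : Orb lam x A) (k : ℤ) :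
    Orb lam (x + k * lam) (upd A k) := by
  rw [Orb_iff] at h ⊢
  have e : x + k * lam - (upd A k 0 : ℤ) * lam = x - A 0 * lam := by
    simp [upd]; ring
  rw [e]
  refine ⟨h.1, ?_, ?_⟩
  · intro h'; apply h.2.1; linarith
  · exact h.2.2

lemma Orb_ne_zero {lam x : ℝ} {A : ℕ → ℤ} (hl : 0 < lam) (h : Orb lam x A) : x ≠ 0 := by
  rintro rfl
  rw [Orb_iff] at h
  obtain ⟨h1, h2, -⟩ := h
  have : A 0 = 0 := by
    rw [zero_sub, abs_neg, abs_mul, abs_of_pos hl] at h1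
    have : |(A 0 : ℝ)| < 1 := by
      by_contra hc
      push Not at hc
      nlinarith
    have h3 : |A 0| < 1 := by exact_mod_cast this
    exact Int.abs_lt_one_iff.mp h3
  apply h2; simp [this]

/-- Forced digit. -/
lemma digit_of_lt {lam x : ℝ} {a b : ℤ} (hl : 0 < lam) (h1 : |x - a * lam| ≤ lam / 2)
    (h2 : |x - b * lam| < lam / 2) : a = b := by
  have h3 : |((a : ℝ) - b) * lam| < lam := by
    have e : ((a : ℝ) - b) * lam = (x - b * lam) - (x - a * lam) := by ring
    rw [e]
    calc _ ≤ |x - b * lam| + |x - a * lam| := abs_sub _ _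
      _ < lam := by linarith
  rw [abs_mul, abs_of_pos hl] at h3
  have : |(a : ℝ) - b| < 1 := by
    by_contra hc
    push Not at hc
    nlinarith
  have h4 : |a - b| < 1 := by exact_mod_cast this
  have := Int.abs_lt_one_iff.mp h4
  omega

lemma digit_one {lam x : ℝ} {a : ℤ} (hl : 0 < lam) (h1 : |x - a * lam| ≤ lam / 2)
    (h2 : lam / 2 < x) (h3 : x ≤ lam) : a = 1 := by
  apply digit_of_lt hl h1
  rw [abs_lt]; push_cast; constructor <;> linarith

/-- The `j`-fold image of `x`. -/
noncomputable def tj (q : ℕ) (j : ℕ) (x : ℝ) : ℝ :=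
  (sg q (j + 1) * x - sg q (j + 2)) / (sg q (j + 1) - sg q j * x)

lemma sg_nonneg_q {q : ℕ} (hq : 3 ≤ q) {k : ℕ} (hkq : k < q) : 0 ≤ sg q k := by
  rcases Nat.eq_zero_or_pos k with rfl | h
  · rw [sg_zero]
  · exact (sg_pos hq h hkq).le

lemma tj_zero {q : ℕ} (hq : 3 ≤ q) (x : ℝ) : lamq q + tj q 0 x = x := by
  have := sg_rec (q := q) 0
  simp only [zero_add] at this
  simp [tj, sg_one hq, sg_zero, this]

lemma tj_succ {q : ℕ} (j : ℕ) {x : ℝ} (hx : lamq q - x ≠ 0) :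
    tj q j (1 / (lamq q - x)) = tj q (j + 1) x := by
  unfold tj
  have e1 := sg_rec (q := q) j
  have e2 := sg_rec (q := q) (j + 1)
  rw [show j + 1 + 1 = j + 2 by ring, show j + 1 + 2 = j + 3 by ring] at *
  rw [← mul_div_mul_right _ _ hx]
  congr 1
  · field_simp; rw [e2]; ring
  · field_simp; rw [e1]; ring

lemma fwd {q : ℕ} (hq : 3 ≤ q) : ∀ (j : ℕ) (_ : j < q) (x : ℝ) (A : ℕ → ℤ)
    (_ : lamq q / 2 < x) (_ : sg q j * x ≤ sg q (j + 1)) (_ : Orb (lamq q) x A),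
    sg q j * x < sg q (j + 1) ∧ (∀ i < j, A i = 1) ∧
      Orb (lamq q) (lamq q + tj q j x) (fun i => A (j + i)) := by
  intro j
  induction j with
  | zero =>
    intro _ x A hx _ hA
    rw [tj_zero hq]
    simp only [sg_zero, zero_add, sg_one hq]
    refine ⟨by norm_num, by simp, ?_⟩
    exact hA
  | succ j ih =>
    intro hj x A hx hle hA
    have hl1 := one_le_lamq hq
    have hl2 := lamq_lt_two hq
    have e1 := sg_rec (q := q) j
    have p1 := sg_pos hq (k := j + 1) (by omega) hj
    have p0 := sg_nonneg_q hq (k := j) (by omega)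
    rw [show j + 1 + 1 = j + 2 by ring] at *
    have hxl : x ≤ lamq q := by
      by_contra hc
      push Not at hc
      nlinarith
    rw [Orb_iff] at hA
    obtain ⟨a1, a2, a3⟩ := hA
    have ha : A 0 = 1 := digit_one (by linarith) a1 hx hxl
    rw [ha] at a1 a2 a3
    push_cast at a1 a2 a3
    rw [one_mul] at a1 a2 a3
    have hxl' : 0 < lamq q - x := by
      rcases lt_or_eq_of_le hxl with h | h
      · linarith
      · exact absurd h a2
    have e3 : -1 / (x - lamq q) = 1 / (lamq q - x) := by
      rw [show x - lamq q = -(lamq q - x) by ring, div_neg, neg_div, neg_neg]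
    rw [e3] at a3
    have g1 : lamq q / 2 < 1 / (lamq q - x) := by
      rw [lt_div_iff₀ hxl']; nlinarith
    have g2 : sg q j * (1 / (lamq q - x)) ≤ sg q (j + 1) := by
      rw [mul_one_div, div_le_iff₀ hxl']; nlinarith
    obtain ⟨b1, b2, b3⟩ := ih (by omega) (1 / (lamq q - x)) _ g1 g2 a3
    rw [tj_succ j hxl'.ne'] at b3
    rw [mul_one_div, div_lt_iff₀ hxl'] at b1
    refine ⟨by nlinarith, ?_, ?_⟩
    · intro i hi
      cases i with
      | zero => exact ha
      | succ i => exact b2 i (by omega)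
    · convert b3 using 3 with i
      ring

/-- Prepend `j` ones. -/
def prep (j : ℕ) (C : ℕ → ℤ) : ℕ → ℤ := fun i => if i < j then 1 else C (i - j)

lemma bwd {q : ℕ} (hq : 3 ≤ q) : ∀ (j : ℕ) (_ : j < q) (x : ℝ) (C : ℕ → ℤ)
    (_ : lamq q / 2 < x) (_ : sg q j * x < sg q (j + 1))
    (_ : Orb (lamq q) (lamq q + tj q j x) C), Orb (lamq q) x (prep j C) := by
  intro j
  induction j with
  | zero =>
    intro _ x C hx _ hA
    rw [tj_zero hq] at hA
    exact hA
  | succ j ih =>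
    intro hj x C hx hlt hC
    have hl1 := one_le_lamq hq
    have hl2 := lamq_lt_two hq
    have e1 := sg_rec (q := q) j
    have p1 := sg_pos hq (k := j + 1) (by omega) hj
    have p0 := sg_nonneg_q hq (k := j) (by omega)
    rw [show j + 1 + 1 = j + 2 by ring] at *
    have hxl' : 0 < lamq q - x := by
      by_contra hc
      push Not at hc
      nlinarith
    rw [← tj_succ j hxl'.ne'] at hC
    have := ih (by omega) (1 / (lamq q - x)) C ?_ ?_ hC
    · rw [Orb_iff]
      have e0 : prep (j + 1) C 0 = 1 := by simp [prep]
      rw [e0]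
      push_cast
      have e3 : -1 / (x - 1 * lamq q) = 1 / (lamq q - x) := by
        rw [show x - 1 * lamq q = -(lamq q - x) by ring, div_neg, neg_div, neg_neg]
      rw [e3]
      refine ⟨?_, by linarith, ?_⟩
      · rw [abs_le]; constructor <;> linarith
      · convert this using 2 with n
        simp [prep]
    · rw [lt_div_iff₀ hxl']; nlinarith
    · rw [mul_one_div, div_lt_iff₀ hxl']; nlinarith

/-! ## The two parities -/

lemma sg_even {q h : ℕ} (hq : 3 ≤ q) (hh : q = 2 * h + 2) :
    sg q h = lamq q / 2 * sg q (h + 1) ∧ sg q (h + 2) = sg q h ∧ 0 < sg q (h + 1) := by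
  have e := sg_rec (q := q) h
  have e2 : sg q (h + 2) = sg q h := sg_refl hq (by omega)
  refine ⟨?_, e2, sg_pos hq (by omega) (by omega)⟩
  rw [e2] at e; linarith

lemma sg_odd {q h : ℕ} (hq : 3 ≤ q) (hh : q = 2 * h + 3) :
    sg q h = (lamq q - 1) * sg q (h + 1) ∧ sg q (h + 2) = sg q (h + 1) ∧
      sg q (h + 3) = (lamq q - 1) * sg q (h + 1) ∧ 0 < sg q (h + 1) := by
  have e := sg_rec (q := q) h
  have e2 : sg q (h + 2) = sg q (h + 1) := sg_refl hq (by omega)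
  have e3 : sg q (h + 3) = sg q h := sg_refl hq (by omega)
  have e4 : sg q h = (lamq q - 1) * sg q (h + 1) := by rw [e2] at e; linarith
  exact ⟨e4, e2, by rw [e3, e4], sg_pos hq (by omega) (by omega)⟩

lemma tj_even {q h : ℕ} (hq : 3 ≤ q) (hh : q = 2 * h + 2) (x : ℝ) :
    tj q h x = (x - lamq q / 2) / (1 - lamq q / 2 * x) := by
  obtain ⟨e1, e2, e3⟩ := sg_even hq hh
  unfold tj
  rw [e2, e1, ← mul_div_mul_left (x - lamq q / 2) _ e3.ne']
  congr 1 <;> ring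

lemma tj_odd1 {q h : ℕ} (hq : 3 ≤ q) (hh : q = 2 * h + 3) (x : ℝ) :
    tj q (h + 1) x = (x - (lamq q - 1)) / (1 - x) := by
  obtain ⟨e1, e2, e3, e4⟩ := sg_odd hq hh
  unfold tj
  rw [show h + 1 + 1 = h + 2 by ring, show h + 1 + 2 = h + 3 by ring, e2, e3,
    ← mul_div_mul_left (x - (lamq q - 1)) _ e4.ne']
  congr 1 <;> ring

lemma tj_odd2 {q h : ℕ} (hq : 3 ≤ q) (hh : q = 2 * h + 3) (x : ℝ) :
    tj q h x = (x - 1) / (1 - (lamq q - 1) * x) := by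
  obtain ⟨e1, e2, e3, e4⟩ := sg_odd hq hh
  unfold tj
  rw [e2, e1, ← mul_div_mul_left (x - 1) _ e4.ne']
  congr 1 <;> ring

lemma fwdE {q h : ℕ} (hq : 3 ≤ q) (hh : q = 2 * h + 2) {x : ℝ} {A : ℕ → ℤ}
    (hx : lamq q / 2 < x) (hx2 : lamq q / 2 * x ≤ 1) (hA : Orb (lamq q) x A) :
    lamq q / 2 * x < 1 ∧ (∀ i < h, A i = 1) ∧
      Orb (lamq q) (lamq q + (x - lamq q / 2) / (1 - lamq q / 2 * x)) (fun i => A (h + i)) := by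
  obtain ⟨e1, e2, e3⟩ := sg_even hq hh
  obtain ⟨h1, h2, h3⟩ := fwd hq h (by omega) x A hx (by rw [e1]; nlinarith) hA
  rw [tj_even hq hh] at h3
  refine ⟨?_, h2, h3⟩
  rw [e1] at h1
  by_contra hc
  nlinarith

lemma bwdE {q h : ℕ} (hq : 3 ≤ q) (hh : q = 2 * h + 2) {x : ℝ} {C : ℕ → ℤ}
    (hx : lamq q / 2 < x) (hx2 : lamq q / 2 * x < 1)
    (hC : Orb (lamq q) (lamq q + (x - lamq q / 2) / (1 - lamq q / 2 * x)) C) :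
    Orb (lamq q) x (prep h C) := by
  obtain ⟨e1, e2, e3⟩ := sg_even hq hh
  exact bwd hq h (by omega) x C hx (by rw [e1]; nlinarith) (by rwa [tj_even hq hh])

lemma fwdO1 {q h : ℕ} (hq : 3 ≤ q) (hh : q = 2 * h + 3) {x : ℝ} {A : ℕ → ℤ}
    (hx : lamq q / 2 < x) (hx2 : x ≤ 1) (hA : Orb (lamq q) x A) :
    x < 1 ∧ (∀ i < h + 1, A i = 1) ∧
      Orb (lamq q) (lamq q + (x - (lamq q - 1)) / (1 - x)) (fun i => A (h + 1 + i)) := by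
  obtain ⟨e1, e2, e3, e4⟩ := sg_odd hq hh
  obtain ⟨h1, h2, h3⟩ := fwd hq (h + 1) (by omega) x A hx
    (by rw [show h + 1 + 1 = h + 2 by ring, e2]; nlinarith) hA
  rw [tj_odd1 hq hh] at h3
  refine ⟨?_, h2, h3⟩
  rw [show h + 1 + 1 = h + 2 by ring, e2] at h1
  by_contra hc
  nlinarith

lemma bwdO1 {q h : ℕ} (hq : 3 ≤ q) (hh : q = 2 * h + 3) {x : ℝ} {C : ℕ → ℤ}
    (hx : lamq q / 2 < x) (hx2 : x < 1)
    (hC : Orb (lamq q) (lamq q + (x - (lamq q - 1)) / (1 - x)) C) :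
    Orb (lamq q) x (prep (h + 1) C) := by
  obtain ⟨e1, e2, e3, e4⟩ := sg_odd hq hh
  exact bwd hq (h + 1) (by omega) x C hx
    (by rw [show h + 1 + 1 = h + 2 by ring, e2]; nlinarith) (by rwa [tj_odd1 hq hh])

lemma fwdO2 {q h : ℕ} (hq : 3 ≤ q) (hh : q = 2 * h + 3) {x : ℝ} {A : ℕ → ℤ}
    (hx : lamq q / 2 < x) (hx2 : (lamq q - 1) * x ≤ 1) (hA : Orb (lamq q) x A) :
    (∀ i < h, A i = 1) ∧
      Orb (lamq q) (lamq q + (x - 1) / (1 - (lamq q - 1) * x)) (fun i => A (h + i)) := by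
  obtain ⟨e1, e2, e3, e4⟩ := sg_odd hq hh
  obtain ⟨h1, h2, h3⟩ := fwd hq h (by omega) x A hx (by rw [e1]; nlinarith) hA
  rw [tj_odd2 hq hh] at h3
  exact ⟨h2, h3⟩

lemma bwdO2 {q h : ℕ} (hq : 3 ≤ q) (hh : q = 2 * h + 3) {x : ℝ} {C : ℕ → ℤ}
    (hx : lamq q / 2 < x) (hx2 : (lamq q - 1) * x < 1)
    (hC : Orb (lamq q) (lamq q + (x - 1) / (1 - (lamq q - 1) * x)) C) :
    Orb (lamq q) x (prep h C) := by
  obtain ⟨e1, e2, e3, e4⟩ := sg_odd hq hh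
  exact bwd hq h (by omega) x C hx (by rw [e1]; nlinarith) (by rwa [tj_odd2 hq hh])

lemma parity {q : ℕ} (hq : 3 ≤ q) : (Even q ∧ q = 2 * hQ q + 2 ∧ 1 ≤ hQ q) ∨
    (¬ Even q ∧ q = 2 * hQ q + 3) := by
  unfold hQ
  split_ifs with h
  · left
    refine ⟨h, ?_⟩
    obtain ⟨k, hk⟩ := h
    omega
  · right
    refine ⟨h, ?_⟩
    rw [Nat.not_even_iff_odd] at h
    obtain ⟨k, hk⟩ := h
    omega

lemma Orb_unshift {lam t : ℝ} {A : ℕ → ℤ} (h : Orb lam (lam + t) A) : Orb lam t (upd A (-1)) := by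
  have := Orb_shift h (-1)
  push_cast at this
  rwa [show lam + t + -1 * lam = t by ring] at this

lemma Orb_reshift {lam t : ℝ} {A : ℕ → ℤ} (h : Orb lam t A) : Orb lam (lam + t) (upd A 1) := by
  have := Orb_shift h 1
  push_cast at this
  rwa [show t + 1 * lam = lam + t by ring] at this

lemma not_Orb_endpoint {q : ℕ} (hq : 3 ≤ q) {x : ℝ} {A : ℕ → ℤ} (hx : lamq q / 2 * x = 1) :
    ¬ Orb (lamq q) x A := by
  intro hA
  have hl1 := one_le_lamq hq
  have hl2 := lamq_lt_two hq
  have hx1 : 1 < x := by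
    by_contra hc
    push Not at hc
    nlinarith
  have hxc : lamq q / 2 < x := by linarith
  rcases parity hq with ⟨-, hh, -⟩ | ⟨-, hh⟩
  · have := (fwdE hq hh hxc hx.le hA).1
    linarith
  · have hd : (lamq q - 1) * x < 1 := by nlinarith
    have h1 := (fwdO2 hq hh hxc hd.le hA).2
    have e : (x - 1) / (1 - (lamq q - 1) * x) = 1 := by
      rw [div_eq_one_iff_eq (by linarith)]; linarith
    rw [e] at h1
    have h2 := fwdO1 hq hh (by linarith) le_rfl (Orb_unshift h1)
    exact lt_irrefl _ h2.1

lemma Orb_strict {q : ℕ} (hq : 3 ≤ q) {x : ℝ} {A : ℕ → ℤ} (hA : Orb (lamq q) x A) :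
    |x - A 0 * lamq q| < lamq q / 2 := by
  have hl1 := one_le_lamq hq
  rw [Orb_iff] at hA
  obtain ⟨h1, h2, h3⟩ := hA
  rcases lt_or_eq_of_le h1 with h | h
  · exact h
  exfalso
  rcases abs_choice (x - A 0 * lamq q) with h4 | h4 <;> rw [h4] at h
  · rw [h] at h3
    refine not_Orb_endpoint hq ?_ (Orb_neg h3)
    field_simp
  · have : x - A 0 * lamq q = -(lamq q / 2) := by linarith
    rw [this] at h3
    refine not_Orb_endpoint hq ?_ h3
    field_simp

lemma Orb_unique {q : ℕ} (hq : 3 ≤ q) {x : ℝ} {A B : ℕ → ℤ} (hA : Orb (lamq q) x A)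
    (hB : Orb (lamq q) x B) : A = B := by
  have hl1 := one_le_lamq hq
  have key : ∀ n (x : ℝ) (A B : ℕ → ℤ), Orb (lamq q) x A → Orb (lamq q) x B → A n = B n := by
    intro n
    induction n with
    | zero =>
      intro x A B hA hB
      exact digit_of_lt (by linarith) (Orb_strict hq hA).le (Orb_strict hq hB)
    | succ n ih =>
      intro x A B hA hB
      have h0 : A 0 = B 0 :=
        digit_of_lt (by linarith) (Orb_strict hq hA).le (Orb_strict hq hB)
      have hA' := (Orb_iff.mp hA).2.2
      have hB' := (Orb_iff.mp hB).2.2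
      rw [h0] at hA'
      exact ih _ _ _ hA' hB'
  funext n
  exact key n x A B hA hB

/-! ## The tail relation -/

lemma CT_refl (A : ℕ → ℤ) : CommonTail A A := ⟨0, 0, fun _ => rfl⟩

lemma CT_symm {A B : ℕ → ℤ} (h : CommonTail A B) : CommonTail B A := by
  obtain ⟨m, n, h⟩ := h
  exact ⟨n, m, fun k => (h k).symm⟩

lemma CT_trans {A B C : ℕ → ℤ} (h : CommonTail A B) (h' : CommonTail B C) : CommonTail A C := by
  obtain ⟨m, n, h⟩ := h
  obtain ⟨m', n', h'⟩ := h'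
  refine ⟨m + m', n' + n, fun k => ?_⟩
  have h1 := h (m' + k)
  have h2 := h' (n + k)
  rw [show m + m' + k = m + (m' + k) by ring, h1, show n + (m' + k) = m' + (n + k) by ring, h2,
    show n' + (n + k) = n' + n + k by ring]

lemma CT_neg {A B : ℕ → ℤ} (h : CommonTail A B) :
    CommonTail (fun n => -A n) (fun n => -B n) := by
  obtain ⟨m, n, h⟩ := h
  exact ⟨m, n, fun k => by simp only [h k]⟩

lemma CT_shift (A : ℕ → ℤ) (j : ℕ) : CommonTail A (fun i => A (j + i)) :=
  ⟨j, 0, fun k => by simp⟩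

lemma CT_upd (A : ℕ → ℤ) (k : ℤ) : CommonTail A (upd A k) :=
  ⟨1, 1, fun i => by simp [upd]⟩

lemma CT_prep (A : ℕ → ℤ) (j : ℕ) : CommonTail (prep j A) A :=
  ⟨j, 0, fun i => by simp [prep]⟩

/-- Tail is that of `±ρ`. -/
def Exc (q : ℕ) (A : ℕ → ℤ) : Prop :=
  CommonTail A (rho q) ∨ CommonTail A (fun i => -(rho q i))

def TRel (q : ℕ) (A B : ℕ → ℤ) : Prop := CommonTail A B ∨ (Exc q A ∧ Exc q B)

lemma Exc_of_CT {q : ℕ} {A B : ℕ → ℤ} (h : CommonTail A B) (hA : Exc q A) : Exc q B := by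
  rcases hA with hA | hA
  · exact Or.inl (CT_trans (CT_symm h) hA)
  · exact Or.inr (CT_trans (CT_symm h) hA)

lemma TRel_trans {q : ℕ} {A B C : ℕ → ℤ} (h : TRel q A B) (h' : TRel q B C) : TRel q A C := by
  rcases h with h | ⟨h1, h2⟩ <;> rcases h' with h' | ⟨h3, h4⟩
  · exact Or.inl (CT_trans h h')
  · exact Or.inr ⟨Exc_of_CT (CT_symm h) h3, h4⟩
  · exact Or.inr ⟨h1, Exc_of_CT h' h2⟩
  · exact Or.inr ⟨h1, h4⟩

lemma Exc_neg {q : ℕ} {A : ℕ → ℤ} (hA : Exc q A) : Exc q (fun n => -A n) := by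
  rcases hA with hA | hA
  · exact Or.inr (CT_neg hA)
  · left
    have := CT_neg hA
    simpa using this

lemma TRel_neg {q : ℕ} {A B : ℕ → ℤ} (h : TRel q A B) :
    TRel q (fun n => -A n) (fun n => -B n) := by
  rcases h with h | ⟨h1, h2⟩
  · exact Or.inl (CT_neg h)
  · exact Or.inr ⟨Exc_neg h1, Exc_neg h2⟩

/-- Invariance of the tail class under `S` at `x`. -/
def GG (q : ℕ) (x : ℝ) : Prop :=
  ∀ A, Orb (lamq q) x A → ∃ B, Orb (lamq q) (-1 / x) B ∧ TRel q A B

lemma GG_small {q : ℕ} (hq : 3 ≤ q) {x : ℝ} (hx : |x| ≤ lamq q / 2) : GG q x := by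
  intro A hA
  have hl1 := one_le_lamq hq
  have h0 : 0 = A 0 := digit_of_lt (x := x) (by linarith) (by simpa using hx) (Orb_strict hq hA)
  rw [Orb_iff, ← h0] at hA
  refine ⟨_, by simpa using hA.2.2, Or.inl ⟨1, 0, fun k => ?_⟩⟩
  congr 1; ring

lemma GG_large {q : ℕ} (hq : 3 ≤ q) {x : ℝ} (hx : 1 ≤ lamq q / 2 * |x|) : GG q x := by
  intro A hA
  have hl1 := one_le_lamq hq
  have hx0 : x ≠ 0 := Orb_ne_zero (by linarith) hA
  refine ⟨fun n => Nat.casesOn n 0 A, ?_, Or.inl ⟨0, 1, fun k => ?_⟩⟩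
  · rw [Orb_iff]
    have e0 : ((Nat.casesOn 0 0 A : ℤ) : ℝ) * lamq q = 0 := by simp
    rw [e0, sub_zero]
    refine ⟨?_, ?_, ?_⟩
    · rw [abs_div, abs_neg, abs_one, div_le_iff₀ (abs_pos.mpr hx0)]; exact hx
    · simp [hx0]
    · have : -1 / (-1 / x) = x := by field_simp
      rw [this]; exact hA
  · rw [show 1 + k = k + 1 by ring, zero_add]

lemma GG_neg {q : ℕ} {x : ℝ} (h : GG q (-x)) : GG q x := by
  intro A hA
  obtain ⟨B, hB, hR⟩ := h _ (Orb_neg hA)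
  refine ⟨fun n => - B n, ?_, ?_⟩
  · have := Orb_neg hB
    rwa [div_neg, neg_neg] at this
  · have := TRel_neg hR
    simpa using this

lemma GG_red {q : ℕ} {x t : ℝ} (j j' : ℕ)
    (h1 : ∀ A, Orb (lamq q) x A → Orb (lamq q) (lamq q + t) (fun i => A (j + i)))
    (h2 : ∀ C, Orb (lamq q) (lamq q + 1 / t) C → Orb (lamq q) (1 / x) (prep j' C))
    (h : GG q t) : GG q x := by
  intro A hA
  obtain ⟨B, hB, hR⟩ := h _ (Orb_unshift (h1 A hA))
  have hB2 := Orb_neg hB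
  rw [neg_div, neg_neg] at hB2
  have hB3 := Orb_neg (h2 _ (Orb_reshift hB2))
  refine ⟨_, by rw [neg_div]; exact hB3, ?_⟩
  refine TRel_trans (Or.inl (CT_shift A j)) (TRel_trans (Or.inl (CT_upd _ (-1)))
    (TRel_trans hR (Or.inl ?_)))
  have := CT_neg (CT_trans (CT_prep (upd (fun n => -B n) 1) j') (CT_symm (CT_upd _ 1)))
  simp only [neg_neg] at this
  exact CT_symm this

lemma expand (S : Set ℝ) (f : ℝ → ℝ) (R M κ : ℝ) (hκ : 1 < κ) (hf : ∀ z ∈ S, f z ∈ S)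
    (hM : ∀ z ∈ S, |z - R| ≤ M) (hx : ∀ z ∈ S, κ * |z - R| ≤ |f z - R|) : ∀ z ∈ S, z = R := by
  have key : ∀ n : ℕ, ∀ z ∈ S, κ ^ n * |z - R| ≤ M := by
    intro n
    induction n with
    | zero => intro z hz; simpa using hM z hz
    | succ n ih =>
      intro z hz
      have h1 := ih (f z) (hf z hz)
      have h2 := hx z hz
      have h3 : (0:ℝ) ≤ κ ^ n := by positivity
      calc κ ^ (n + 1) * |z - R| = κ ^ n * (κ * |z - R|) := by ring
        _ ≤ κ ^ n * |f z - R| := mul_le_mul_of_nonneg_left h2 h3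
        _ ≤ M := h1
  intro z hz
  by_contra hne
  have hp : 0 < |z - R| := abs_pos.mpr (sub_ne_zero.mpr hne)
  obtain ⟨n, hn⟩ := pow_unbounded_of_one_lt (M / |z - R|) hκ
  rw [div_lt_iff₀ hp] at hn
  linarith [key n z hz]

lemma rho_even {q : ℕ} (hq : 3 ≤ q) (he : Even q) (h1 : 1 ≤ hQ q) {k : ℕ} :
    rho q k = if k % hQ q < hQ q - 1 then 1 else 2 := by
  have hne : q ≠ 3 := by rintro rfl; exact absurd he (by decide)
  have hlen : (rhoBlock q).length = hQ q := by
    simp [rhoBlock, hne, he]; omega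
  unfold rho
  rw [hlen]
  have hlt : k % hQ q < hQ q := Nat.mod_lt _ h1
  simp only [rhoBlock, hne, he, if_true, if_false]
  split_ifs with hc
  · rw [List.getD_append _ _ _ _ (by simpa using hc), List.getD_eq_getElem _ _ (by simpa using hc)]
    simp
  · rw [List.getD_append_right _ _ _ _ (by simpa using hc)]
    have : k % hQ q = hQ q - 1 := by omega
    simp [this]

lemma rho_odd {q : ℕ} (hq : 3 ≤ q) (he : ¬ Even q) {k : ℕ} :
    rho q k = if q = 3 then 3 else if k % (2 * hQ q + 1) = hQ q ∨ k % (2 * hQ q + 1) = 2 * hQ q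
      then 2 else 1 := by
  by_cases hne : q = 3
  · subst hne
    simp [rho, rhoBlock, Nat.mod_one]
  have h1 : 1 ≤ hQ q := by
    unfold hQ
    rw [if_neg he]
    rw [Nat.not_even_iff_odd] at he
    obtain ⟨m, hm⟩ := he
    omega
  have hlen : (rhoBlock q).length = 2 * hQ q + 1 := by
    simp [rhoBlock, hne, he]; omega
  unfold rho
  rw [hlen]
  have hlt : k % (2 * hQ q + 1) < 2 * hQ q + 1 := Nat.mod_lt _ (by omega)
  generalize k % (2 * hQ q + 1) = r at *
  simp only [rhoBlock, hne, he, if_false]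
  generalize hQ q = h at *
  rcases lt_trichotomy r h with hr | hr | hr
  · rw [List.getD_append _ _ _ _ (by simpa using hr), List.getD_eq_getElem _ _ (by simpa using hr)]
    simp; omega
  · subst hr
    rw [List.getD_append_right _ _ _ _ (by simp)]
    simp
  · rw [List.getD_append_right _ _ _ _ (by simp; omega)]
    obtain ⟨s, rfl⟩ : ∃ s, r = h + (s + 1) := ⟨r - h - 1, by omega⟩
    simp only [List.length_replicate, Nat.add_sub_cancel_left, List.getD_cons_succ]
    by_cases hs : s < h - 1
    · rw [List.getD_append _ _ _ _ (by simpa using hs),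
        List.getD_eq_getElem _ _ (by simpa using hs)]
      simp; omega
    · rw [List.getD_append_right _ _ _ _ (by simpa using hs)]
      have : s = h - 1 := by omega
      subst this
      simp; omega

/-! ## Invariance under `S` -/

lemma GG_one_even {q : ℕ} (hq : 3 ≤ q) (he : Even q) (hh : q = 2 * hQ q + 2) (h1 : 1 ≤ hQ q) :
    GG q 1 := by
  intro A hA
  have hl1 := one_le_lamq hq
  have hl2 := lamq_lt_two hq
  refine ⟨fun n => -A n, ?_, ?_⟩
  · have := Orb_neg hA
    rwa [div_one]
  obtain ⟨-, b2, b3⟩ := fwdE hq hh (by linarith) (by linarith) hA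
  rw [mul_one, div_self (by linarith)] at b3
  have hu := Orb_unique hq (Orb_unshift b3) hA
  have hA0 : A 0 = 1 := b2 0 h1
  have hAh : A (hQ q) = 2 := by
    have := congrFun hu 0
    simp [upd] at this
    omega
  have hper : Function.Periodic (fun k => A (1 + k)) (hQ q) := by
    intro k
    have := congrFun hu (1 + k)
    simp only [upd] at this
    rw [if_neg (by omega)] at this
    simp only
    rw [← this]
    congr 1; ring
  have hE : CommonTail A (rho q) := by
    refine ⟨1, 0, fun k => ?_⟩
    have e : A (1 + k % hQ q) = A (1 + k) := hper.map_mod_nat k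
    rw [← e, zero_add, rho_even hq he h1]
    have hlt : k % hQ q < hQ q := Nat.mod_lt _ h1
    split_ifs with hc
    · exact b2 _ (by omega)
    · rw [show 1 + k % hQ q = hQ q by omega, hAh]
  exact Or.inr ⟨Or.inl hE, Or.inr (CT_neg hE)⟩

lemma GG_pos_even {q : ℕ} (hq : 3 ≤ q) (he : Even q) (hh : q = 2 * hQ q + 2) (h1 : 1 ≤ hQ q)
    {x : ℝ} (hx : 0 < x) : GG q x := by
  have hl1 := one_le_lamq hq
  have hl2 := lamq_lt_two hq
  set c := lamq q / 2 with hc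
  have mem : ∀ z, 0 < z → ¬ GG q z → c < z ∧ c * z < 1 := by
    intro z hz hG
    constructor
    · by_contra hcon
      exact hG (GG_small hq (by rw [abs_of_pos hz]; linarith))
    · by_contra hcon
      exact hG (GG_large hq (by rw [abs_of_pos hz, ← hc]; linarith))
  have key : ∀ z ∈ {z : ℝ | 0 < z ∧ ¬ GG q z}, z = 1 := by
    apply expand _ (fun z => (z - c) / (1 - c * z)) 1 2 (1 + c) (by linarith)
    · rintro z ⟨hz, hG⟩
      obtain ⟨m1, m2⟩ := mem z hz hG
      have ht : 0 < (z - c) / (1 - c * z) := div_pos (by linarith) (by linarith)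
      refine ⟨ht, fun hGt => hG ?_⟩
      refine GG_red (hQ q) (hQ q) ?_ ?_ hGt
      · intro A hA
        exact (fwdE hq hh m1 m2.le hA).2.2
      · intro C hC
        apply bwdE hq hh
        · rw [lt_div_iff₀ hz, ← hc]; linarith
        · rw [mul_one_div, div_lt_one hz]; linarith
        · convert hC using 2
          rw [← hc]
          have : z - c ≠ 0 := by linarith
          rw [one_div_div, ← mul_div_mul_right (1 / z - c) _ hz.ne']
          congr 1 <;> field_simp
    · rintro z ⟨hz, hG⟩
      obtain ⟨m1, m2⟩ := mem z hz hG
      rw [abs_le]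
      constructor
      · linarith
      · nlinarith
    · rintro z ⟨hz, hG⟩
      obtain ⟨m1, m2⟩ := mem z hz hG
      have hp : 0 < 1 - c * z := by linarith
      have e : (z - c) / (1 - c * z) - 1 = (1 + c) * (z - 1) / (1 - c * z) := by
        have hp' := hp.ne'
        rw [eq_div_iff hp', sub_mul, div_mul_cancel₀ _ hp']; ring
      rw [e, abs_div, abs_mul, abs_of_pos hp, abs_of_pos (show 0 < 1 + c by linarith),
        le_div_iff₀ hp]
      have h3 : 0 ≤ (1 + c) * |z - 1| := by
        have := abs_nonneg (z - 1)
        have : 0 ≤ 1 + c := by linarith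
        positivity
      have h4 : 0 < c * z := mul_pos (by linarith) hz
      nlinarith
  by_contra hG
  have := key x ⟨hx, hG⟩
  subst this
  exact hG (GG_one_even hq he hh h1)

lemma GG_R_odd {q : ℕ} (hq : 3 ≤ q) (he : ¬ Even q) (hh : q = 2 * hQ q + 3) {R : ℝ}
    (hR1 : lamq q / 2 < R) (hR2 : R < 1) (hR : R * (R - (lamq q - 1)) = 1 - R) :
    GG q R := by
  intro A hA
  have hl1 := one_le_lamq hq
  have hl2 := lamq_lt_two hq
  have hR0 : 0 < R := by linarith
  obtain ⟨-, b2, b3⟩ := fwdO1 hq hh hR1 hR2.le hA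
  have e1 : (R - (lamq q - 1)) / (1 - R) = 1 / R := by
    rw [div_eq_div_iff (by linarith) hR0.ne']; linarith
  rw [e1] at b3
  have b4 := Orb_unshift b3
  set A2 := upd (fun i => A (hQ q + 1 + i)) (-1) with hA2
  obtain ⟨c2, c3⟩ := fwdO2 hq hh (x := 1 / R) (by rw [lt_div_iff₀ hR0]; nlinarith)
    (by rw [mul_one_div, div_le_one hR0]; linarith) b4
  have e2 : (1 / R - 1) / (1 - (lamq q - 1) * (1 / R)) = R := by
    have h3 : 1 - (lamq q - 1) * (1 / R) ≠ 0 := by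
      have : (lamq q - 1) * (1 / R) < 1 := by
        rw [mul_one_div, div_lt_one hR0]; linarith
      linarith
    rw [div_eq_iff h3]
    field_simp
    linarith
  rw [e2] at c3
  have hu := Orb_unique hq (Orb_unshift c3) hA
  have hA0 : A 0 = 1 := b2 0 (by omega)
  have hA2s : ∀ i, A2 (i + 1) = A (hQ q + 1 + (i + 1)) := fun i => by simp [hA2, upd]
  have hA20 : A2 0 = A (hQ q + 1) - 1 := by simp [hA2, upd]; ring
  have hA2h : A2 (hQ q) = 2 := by
    have := congrFun hu 0
    simp [upd] at this
    omega
  have hus : ∀ i, A2 (hQ q + (i + 1)) = A (i + 1) := by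
    intro i
    have := congrFun hu (i + 1)
    simpa [upd] using this
  have hper : Function.Periodic (fun k => A (1 + k)) (2 * hQ q + 1) := by
    intro k
    simp only
    have h3 := hA2s (hQ q + k)
    rw [show hQ q + k + 1 = hQ q + (k + 1) by ring, hus k] at h3
    rw [show 1 + k = k + 1 by ring, h3]
    congr 1; ring
  have hE : CommonTail A (rho q) := by
    refine ⟨1, 0, fun k => ?_⟩
    have e : A (1 + k % (2 * hQ q + 1)) = A (1 + k) := hper.map_mod_nat k
    rw [← e, zero_add, rho_odd hq he]
    have hlt : k % (2 * hQ q + 1) < 2 * hQ q + 1 := Nat.mod_lt _ (by omega)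
    generalize k % (2 * hQ q + 1) = r at *
    split_ifs with hc hd
    · have h0 : hQ q = 0 := by omega
      have hr : r = 0 := by omega
      rw [h0] at hA2h hA20
      simp only [hr]
      norm_num at hA20 ⊢
      omega
    · have h0 : 1 ≤ hQ q := by omega
      rcases hd with hd | hd
      · have := c2 0 (by omega)
        rw [hd, show 1 + hQ q = hQ q + 1 by ring]
        omega
      · have := hA2s (hQ q - 1)
        rw [show hQ q - 1 + 1 = hQ q by omega, hA2h] at this
        rw [hd, this]
        congr 1; omega
    · push Not at hd
      rcases lt_or_ge r (hQ q) with hr | hr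
      · exact b2 _ (by omega)
      · obtain ⟨s, rfl⟩ : ∃ s, r = hQ q + 1 + s := ⟨r - hQ q - 1, by omega⟩
        have h3 := c2 (s + 1) (by omega)
        rw [hA2s s] at h3
        rw [← h3]
        congr 1; ring
  refine ⟨fun n => -A2 n, ?_, Or.inr ⟨Or.inl hE, Or.inr (CT_neg ?_)⟩⟩
  · rw [neg_div]; exact Orb_neg b4
  · exact CT_trans (CT_symm (CT_trans (CT_shift A (hQ q + 1)) (CT_upd _ (-1)))) hE

lemma exists_R {lam : ℝ} (h1 : 1 ≤ lam) (h2 : lam < 2) :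
    ∃ R : ℝ, 0 < R ∧ R < 1 ∧ R * (R - (lam - 1)) = 1 - R := by
  have hD := Real.sq_sqrt (show 0 ≤ (2 - lam) ^ 2 + 4 by positivity)
  have hD0 := Real.sqrt_nonneg ((2 - lam) ^ 2 + 4)
  set D := Real.sqrt ((2 - lam) ^ 2 + 4)
  refine ⟨(D - (2 - lam)) / 2, ?_, ?_, ?_⟩ <;> nlinarith

lemma GG_pos_odd {q : ℕ} (hq : 3 ≤ q) (he : ¬ Even q) (hh : q = 2 * hQ q + 3)
    {x : ℝ} (hx : 0 < x) : GG q x := by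
  have hl1 := one_le_lamq hq
  have hl2 := lamq_lt_two hq
  obtain ⟨R, hR0, hR1, hR⟩ := exists_R hl1 hl2
  have hRd : 0 < R - (lamq q - 1) := by
    by_contra hcon
    push Not at hcon
    nlinarith
  set c := lamq q / 2 with hc
  set d := lamq q - 1 with hd
  have hd0 : 0 ≤ d := by linarith
  have mem : ∀ z, 0 < z → ¬ GG q z → c < z ∧ c * z < 1 := by
    intro z hz hG
    constructor
    · by_contra hcon
      exact hG (GG_small hq (by rw [abs_of_pos hz]; linarith))
    · by_contra hcon
      exact hG (GG_large hq (by rw [abs_of_pos hz, ← hc]; linarith))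
  -- first reduction
  have red1 : ∀ z, c < z → z < 1 → GG q ((z - d) / (1 - z)) → GG q z := by
    intro z hz1 hz2 hG
    have hz : 0 < z := by linarith
    refine GG_red (hQ q + 1) (hQ q) ?_ ?_ hG
    · intro A hA
      exact (fwdO1 hq hh hz1 hz2.le hA).2.2
    · intro C hC
      apply bwdO2 hq hh
      · rw [lt_div_iff₀ hz]; nlinarith
      · rw [mul_one_div, div_lt_one hz]; linarith
      · convert hC using 2
        rw [← hd, one_div_div, ← mul_div_mul_right (1 / z - 1) _ hz.ne']
        congr 1 <;> field_simp
  have red2 : ∀ z, 1 < z → c * z < 1 → GG q ((z - 1) / (1 - d * z)) → GG q z := by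
    intro z hz1 hz2 hG
    have hz : 0 < z := by linarith
    have hdz : d * z < 1 := by nlinarith
    refine GG_red (hQ q) (hQ q + 1) ?_ ?_ hG
    · intro A hA
      exact (fwdO2 hq hh (by linarith) hdz.le hA).2
    · intro C hC
      apply bwdO1 hq hh
      · rw [lt_div_iff₀ hz, ← hc]; linarith
      · rw [div_lt_one hz]; linarith
      · convert hC using 2
        rw [← hd, one_div_div, ← mul_div_mul_right (1 / z - d) _ hz.ne']
        congr 1 <;> field_simp
  have tau : ∀ z, c < z → z < 1 →
      1 / (R - d) * |z - R| ≤ |(1 - z) / (z - d) - R| := by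
    intro z hz1 hz2
    have hzd : 0 < z - d := by linarith
    have e : (1 - z) / (z - d) - R = (R - z) * ((1 - d) / ((z - d) * (R - d))) := by
      have : R = (1 - R) / (R - d) := by rw [eq_div_iff hRd.ne']; exact hR
      nth_rewrite 1 [this]
      field_simp
      ring
    have hpos : 0 < (1 - d) / ((z - d) * (R - d)) := div_pos (by linarith) (by positivity)
    rw [e, abs_mul, abs_sub_comm R z, mul_comm, abs_of_pos hpos]
    apply mul_le_mul_of_nonneg_left _ (abs_nonneg _)
    rw [div_le_div_iff₀ hRd (by positivity)]
    nlinarith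
  have hκ : 1 < 1 / (R - d) := by
    rw [lt_div_iff₀ hRd]; linarith
  have step1 : ∀ z, c < z → z < 1 → ¬ GG q z →
      1 < (z - d) / (1 - z) ∧ c * ((z - d) / (1 - z)) < 1 ∧ ¬ GG q ((z - d) / (1 - z)) := by
    intro z hz1 hz2 hG
    have h1 : 1 < (z - d) / (1 - z) := by rw [lt_div_iff₀ (by linarith)]; linarith
    have h2 : ¬ GG q ((z - d) / (1 - z)) := fun h => hG (red1 z hz1 hz2 h)
    exact ⟨h1, (mem _ (by linarith) h2).2, h2⟩
  have step2 : ∀ z, 1 < z → c * z < 1 → ¬ GG q z →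
      c < (z - 1) / (1 - d * z) ∧ (z - 1) / (1 - d * z) < 1 ∧ ¬ GG q ((z - 1) / (1 - d * z)) := by
    intro z hz1 hz2 hG
    have hdz : d * z < 1 := by nlinarith
    have h1 : (z - 1) / (1 - d * z) < 1 := by
      have e5 : d * z = 2 * (c * z) - z := by rw [hd, hc]; ring
      rw [div_lt_one (by linarith)]; linarith
    have h0 : 0 < (z - 1) / (1 - d * z) := div_pos (by linarith) (by linarith)
    have h2 : ¬ GG q ((z - 1) / (1 - d * z)) := fun h => hG (red2 z hz1 hz2 h)
    exact ⟨(mem _ h0 h2).1, h1, h2⟩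
  have key : ∀ z ∈ {z : ℝ | c < z ∧ z < 1 ∧ ¬ GG q z}, z = R := by
    apply expand _ (fun z => ((z - d) / (1 - z) - 1) / (1 - d * ((z - d) / (1 - z)))) R 1
      (1 / (R - d)) hκ
    · rintro z ⟨hz1, hz2, hG⟩
      obtain ⟨a1, a2, a3⟩ := step1 z hz1 hz2 hG
      exact step2 _ a1 a2 a3
    · rintro z ⟨hz1, hz2, hG⟩
      rw [abs_le]; constructor <;> linarith
    · rintro z ⟨hz1, hz2, hG⟩
      obtain ⟨a1, a2, a3⟩ := step1 z hz1 hz2 hG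
      have t1 := tau z hz1 hz2
      have hzd : 0 < z - d := by linarith
      have hz1' : 0 < 1 - z := by linarith
      set w := (1 - z) / (z - d) with hw
      have hw0 : 0 < w := div_pos hz1' hzd
      have e : (z - d) / (1 - z) = 1 / w := by rw [hw, one_div_div]
      rw [e] at a1 a2
      have w1 : w < 1 := by rwa [lt_div_iff₀ hw0, one_mul] at a1
      have w2 : c < w := by rwa [mul_one_div, div_lt_one hw0] at a2
      have t2 := tau w w2 w1
      have e2 : ((z - d) / (1 - z) - 1) / (1 - d * ((z - d) / (1 - z))) = (1 - w) / (w - d) := by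
        rw [e, ← mul_div_mul_right (1 / w - 1) _ hw0.ne']
        congr 1 <;> field_simp
      simp only [e2]
      refine le_trans ?_ t2
      apply mul_le_mul_of_nonneg_left _ (by linarith)
      refine le_trans ?_ t1
      have := abs_nonneg (z - R)
      nlinarith
  have empty : ∀ z, c < z → z < 1 → GG q z := by
    intro z hz1 hz2
    by_contra hG
    have := key z ⟨hz1, hz2, hG⟩
    subst this
    exact hG (GG_R_odd hq he hh hz1 hz2 hR)
  by_contra hG
  obtain ⟨m1, m2⟩ := mem x hx hG
  rcases lt_trichotomy x 1 with h | h | h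
  · exact hG (empty x m1 h)
  · apply hG
    intro A hA
    exact absurd (fwdO1 hq hh m1 h.le hA).1 (by linarith)
  · obtain ⟨a1, a2, a3⟩ := step2 x h m2 hG
    exact a3 (empty _ a1 a2)

lemma GG_all {q : ℕ} (hq : 3 ≤ q) (x : ℝ) : GG q x := by
  have pos : ∀ x, 0 < x → GG q x := by
    intro x hx
    rcases parity hq with ⟨he, hh, h1⟩ | ⟨he, hh⟩
    · exact GG_pos_even hq he hh h1 hx
    · exact GG_pos_odd hq he hh hx
  have hl1 := one_le_lamq hq
  rcases lt_trichotomy x 0 with h | h | h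
  · exact GG_neg (pos _ (by linarith))
  · exact GG_small hq (by rw [h, abs_zero]; linarith)
  · exact pos x h

/-! ## Invariance under the Hecke group -/

/-- The denominator of the Moebius action. -/
noncomputable def den (g : Matrix.SpecialLinearGroup (Fin 2) ℝ) (x : ℝ) : ℝ :=
  g.val 1 0 * x + g.val 1 1

lemma den_mul (g k : Matrix.SpecialLinearGroup (Fin 2) ℝ) {x : ℝ} (hk : den k x ≠ 0) :
    den (g * k) x = den g (moeb k x) * den k x := by
  unfold den moeb at *
  simp only [Matrix.SpecialLinearGroup.coe_mul, Matrix.mul_apply, Fin.sum_univ_two]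
  field_simp
  ring

lemma moeb_mul (g k : Matrix.SpecialLinearGroup (Fin 2) ℝ) {x : ℝ} (hk : den k x ≠ 0)
    (hg : den g (moeb k x) ≠ 0) :
    moeb (g * k) x = moeb g (moeb k x) := by
  have h1 := den_mul g k hk
  have h2 : den (g * k) x ≠ 0 := by rw [h1]; exact mul_ne_zero hg hk
  have h3 : moeb (g * k) x * den (g * k) x = moeb g (moeb k x) * den (g * k) x := by
    rw [h1]
    have e1 : moeb g (moeb k x) * den g (moeb k x) =
        g.val 0 0 * moeb k x + g.val 0 1 := div_mul_cancel₀ _ hg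
    have e2 : moeb k x * den k x = k.val 0 0 * x + k.val 0 1 := div_mul_cancel₀ _ hk
    have e3 : moeb (g * k) x * (den g (moeb k x) * den k x) =
        (g * k).val 0 0 * x + (g * k).val 0 1 := by
      rw [← h1]; exact div_mul_cancel₀ _ h2
    rw [e3, ← mul_assoc, e1, add_mul, mul_assoc, e2]
    unfold den
    simp only [Matrix.SpecialLinearGroup.coe_mul, Matrix.mul_apply, Fin.sum_univ_two]
    ring
  exact mul_right_cancel₀ h2 h3

/-- `g` preserves orbits up to the tail relation. -/
def PG (q : ℕ) (g : Matrix.SpecialLinearGroup (Fin 2) ℝ) : Prop :=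
  ∀ x A, Orb (lamq q) x A → den g x ≠ 0 ∧ ∃ B, Orb (lamq q) (moeb g x) B ∧ TRel q A B

lemma PG_mul {q : ℕ} {g k : Matrix.SpecialLinearGroup (Fin 2) ℝ} (hg : PG q g) (hk : PG q k) :
    PG q (g * k) := by
  intro x A hA
  obtain ⟨h1, B, hB, hAB⟩ := hk x A hA
  obtain ⟨h2, C, hC, hBC⟩ := hg _ B hB
  refine ⟨?_, C, ?_, TRel_trans hAB hBC⟩
  · rw [den_mul g k h1]; exact mul_ne_zero h2 h1
  · rw [moeb_mul g k h1 h2]; exact hC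

lemma PG_one {q : ℕ} : PG q 1 := by
  intro x A hA
  refine ⟨by simp [den], A, by simpa [moeb] using hA, Or.inl (CT_refl A)⟩

lemma PG_of_S {q : ℕ} (hq : 3 ≤ q) {g : Matrix.SpecialLinearGroup (Fin 2) ℝ}
    (h : ∀ x, x ≠ 0 → den g x ≠ 0 ∧ moeb g x = -1 / x) : PG q g := by
  intro x A hA
  have hl1 := one_le_lamq hq
  have hx := Orb_ne_zero (by linarith) hA
  obtain ⟨h1, h2⟩ := h x hx
  rw [h2]
  exact ⟨h1, GG_all hq x A hA⟩

lemma PG_of_T {q : ℕ} {g : Matrix.SpecialLinearGroup (Fin 2) ℝ} (k : ℤ)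
    (h : ∀ x, den g x ≠ 0 ∧ moeb g x = x + k * lamq q) : PG q g := by
  intro x A hA
  obtain ⟨h1, h2⟩ := h x
  rw [h2]
  exact ⟨h1, upd A k, Orb_shift hA k, Or.inl (CT_upd A k)⟩

lemma actS {x : ℝ} (hx : x ≠ 0) : den matS x ≠ 0 ∧ moeb matS x = -1 / x := by
  simp [den, moeb, matS, hx]

lemma actSi {x : ℝ} (hx : x ≠ 0) : den matS⁻¹ x ≠ 0 ∧ moeb matS⁻¹ x = -1 / x := by
  have e : (matS⁻¹).val = !![0, 1; -1, 0] := by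
    refine (Matrix.SpecialLinearGroup.coe_inv matS).trans ?_
    rw [Matrix.adjugate_fin_two]
    simp [matS]
  simp [den, moeb, e, hx]
  field_simp

lemma actT (lam x : ℝ) : den (matT lam) x ≠ 0 ∧ moeb (matT lam) x = x + lam := by
  simp [den, moeb, matT]

lemma actTi (lam x : ℝ) : den (matT lam)⁻¹ x ≠ 0 ∧ moeb (matT lam)⁻¹ x = x - lam := by
  have e : ((matT lam)⁻¹).val = !![1, -lam; 0, 1] := by
    refine (Matrix.SpecialLinearGroup.coe_inv (matT lam)).trans ?_
    rw [Matrix.adjugate_fin_two]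
    simp [matT]
  simp [den, moeb, e]
  ring

lemma PG_all {q : ℕ} (hq : 3 ≤ q) {g : Matrix.SpecialLinearGroup (Fin 2) ℝ} (hg : g ∈ Hecke q) :
    PG q g := by
  suffices h : PG q g ∧ PG q g⁻¹ from h.1
  unfold Hecke at hg
  induction hg using Subgroup.closure_induction with
  | mem x hx =>
    simp only [Set.mem_insert_iff, Set.mem_singleton_iff] at hx
    rcases hx with rfl | rfl
    · exact ⟨PG_of_S hq fun x hx => actS hx, PG_of_S hq fun x hx => actSi hx⟩
    · refine ⟨PG_of_T 1 fun x => ?_, PG_of_T (-1) fun x => ?_⟩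
      · simpa using actT (lamq q) x
      · have := actTi (lamq q) x
        refine ⟨this.1, ?_⟩
        rw [this.2]; push_cast; ring
  | one => rw [inv_one]; exact ⟨PG_one, PG_one⟩
  | mul x y _ _ hx hy => rw [mul_inv_rev]; exact ⟨PG_mul hx.1 hy.1, PG_mul hy.2 hx.2⟩
  | inv x _ hx => rw [inv_inv]; exact ⟨hx.2, hx.1⟩

lemma Gq_refl (q : ℕ) (x : ℝ) : GqEquiv q x x :=
  ⟨1, one_mem _, by simp, by simp [moeb]⟩

lemma Gq_trans {q : ℕ} {x y z : ℝ} (h1 : GqEquiv q x y) (h2 : GqEquiv q y z) : GqEquiv q x z := by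
  obtain ⟨g, hg, hd, rfl⟩ := h1
  obtain ⟨k, hk, hd2, rfl⟩ := h2
  refine ⟨k * g, mul_mem hk hg, ?_, moeb_mul k g hd hd2⟩
  have := den_mul k g hd
  unfold den at this
  rw [this]
  exact mul_ne_zero hd2 hd

lemma Gq_symm {q : ℕ} {x y : ℝ} (h1 : GqEquiv q x y) : GqEquiv q y x := by
  obtain ⟨g, hg, hd, rfl⟩ := h1
  have h3 := den_mul g⁻¹ g hd
  have h4 : den g⁻¹ (moeb g x) ≠ 0 := by
    intro h
    rw [h, inv_mul_cancel, zero_mul] at h3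
    simp [den] at h3
  refine ⟨g⁻¹, inv_mem hg, h4, ?_⟩
  rw [← moeb_mul g⁻¹ g hd h4, inv_mul_cancel]
  simp [moeb]

lemma Gq_S {q : ℕ} {x : ℝ} (hx : x ≠ 0) : GqEquiv q x (-1 / x) :=
  ⟨matS, Subgroup.subset_closure (by simp), (actS hx).1, (actS hx).2⟩

lemma Gq_T {q : ℕ} (x : ℝ) : GqEquiv q x (x + lamq q) :=
  ⟨matT (lamq q), Subgroup.subset_closure (by simp), (actT _ x).1, (actT _ x).2⟩

lemma Gq_Tk {q : ℕ} (x : ℝ) (k : ℤ) : GqEquiv q x (x + k * lamq q) := by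
  induction k using Int.induction_on with
  | zero => simpa using Gq_refl q x
  | succ i ih =>
    refine Gq_trans ih ?_
    convert Gq_T (q := q) (x + (i : ℤ) * lamq q) using 1
    push_cast; ring
  | pred i ih =>
    refine Gq_trans ih (Gq_symm ?_)
    convert Gq_T (q := q) (x + (-(i : ℤ) - 1 : ℤ) * lamq q) using 1
    push_cast; ring

open Filter Topology

/-! ## Convergents of regular continued fractions -/

lemma cf_shift (lam : ℝ) (A : ℕ → ℤ) (n : ℕ) :
    (cfQ lam A (n + 1) = cfP lam (fun i => A (i + 1)) n ∧
      cfP lam A (n + 1) = A 0 * lam * cfP lam (fun i => A (i + 1)) n -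
        cfQ lam (fun i => A (i + 1)) n) ∧
    (cfQ lam A (n + 2) = cfP lam (fun i => A (i + 1)) (n + 1) ∧
      cfP lam A (n + 2) = A 0 * lam * cfP lam (fun i => A (i + 1)) (n + 1) -
        cfQ lam (fun i => A (i + 1)) (n + 1)) := by
  induction n with
  | zero =>
    refine ⟨⟨?_, ?_⟩, ?_, ?_⟩ <;> simp [cfP, cfQ] <;> ring
  | succ n ih =>
    obtain ⟨⟨a1, a2⟩, a3, a4⟩ := ih
    refine ⟨⟨a3, a4⟩, ?_, ?_⟩
    · rw [cfQ, cfP, a3, a1]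
    · rw [cfP, a4, a2, cfP, cfQ]
      ring

/-- Tail values of the finite continued fractions. -/
noncomputable def vv (lam : ℝ) : ℕ → (ℕ → ℤ) → ℝ
  | 0, _ => 0
  | n + 1, A => -1 / (A 0 * lam + vv lam n (fun i => A (i + 1)))

lemma vv_neg (lam : ℝ) (n : ℕ) : ∀ A, vv lam n (fun i => -A i) = -vv lam n A := by
  induction n with
  | zero => intro A; simp [vv]
  | succ n ih =>
    intro A
    have := ih (fun i => A (i + 1))
    simp only [vv]
    rw [this, ← div_neg]
    congr 1; push_cast; ring

/-- Nonzero digits and regular. -/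
def Good (q : ℕ) (A : ℕ → ℤ) : Prop := (∀ i, A i ≠ 0) ∧ RegularSeq q A

lemma Good_shift {q : ℕ} {A : ℕ → ℤ} (h : Good q A) : Good q (fun i => A (i + 1)) := by
  refine ⟨fun i => h.1 _, fun l len hf => h.2 (l + 1) len ?_⟩
  convert hf using 4
  ring

lemma Good_neg {q : ℕ} {A : ℕ → ℤ} (h : Good q A) : Good q (fun i => -A i) := by
  refine ⟨fun i => neg_ne_zero.mpr (h.1 _), fun l len hf => h.2 l len ?_⟩
  have e : (List.ofFn fun j : Fin len => A (l + (j : ℕ))) =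
      (List.ofFn fun j : Fin len => -A (l + (j : ℕ))).map (fun z => -z) := by
    rw [List.map_ofFn]; congr 1; funext j; simp
  rw [e]
  obtain ⟨ε, hε, hL⟩ := hf
  refine ⟨-ε, by omega, ?_⟩
  rcases hL with hL | hL
  · left; rw [hL]; simp
  · right
    split_ifs at hL ⊢ with hev
    · obtain ⟨m, hm, hL⟩ := hL
      exact ⟨m, hm, by rw [hL]; simp⟩
    · obtain ⟨m, hm, hL⟩ := hL
      exact ⟨m, hm, by rw [hL]; simp⟩

lemma reg_ones {q : ℕ} {A : ℕ → ℤ} (h : Good q A) : ¬ (∀ i < hQ q + 1, A i = 1) := by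
  intro hA
  refine h.2 0 (hQ q + 1) ⟨1, Or.inl rfl, Or.inl ?_⟩
  apply List.ext_getElem
  · simp
  · intro i h1 h2
    rw [List.getElem_ofFn, List.getElem_replicate, zero_add]
    simp at h1
    exact hA i (by omega)

lemma reg_even {q : ℕ} {A : ℕ → ℤ} (he : Even q) (h : Good q A) (hA : ∀ i < hQ q, A i = 1) :
    A (hQ q) < 0 := by
  by_contra hcon
  have h0 := h.1 (hQ q)
  refine h.2 0 (hQ q + 1) ⟨1, Or.inl rfl, Or.inr ?_⟩
  rw [if_pos he]
  refine ⟨A (hQ q), by omega, ?_⟩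
  apply List.ext_getElem
  · simp
  · intro i h1 h2
    simp only [List.getElem_ofFn, List.getElem_append, List.length_replicate,
      List.getElem_replicate, zero_add, one_mul, List.getElem_singleton]
    simp at h1
    split_ifs with hi
    · exact hA i hi
    · rw [show i = hQ q by omega]

lemma reg_odd {q : ℕ} {A : ℕ → ℤ} (he : ¬ Even q) (h : Good q A) (hA : ∀ i < hQ q, A i = 1)
    (h2 : A (hQ q) = 2) (hB : ∀ i < hQ q, A (hQ q + 1 + i) = 1) :
    A (2 * hQ q + 1) < 0 := by
  by_contra hcon
  have h0 := h.1 (2 * hQ q + 1)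
  refine h.2 0 (2 * hQ q + 2) ⟨1, Or.inl rfl, Or.inr ?_⟩
  rw [if_neg he]
  refine ⟨A (2 * hQ q + 1), by omega, ?_⟩
  apply List.ext_getElem
  · simp; ring
  · intro i h1 h2
    simp only [List.getElem_ofFn, List.getElem_append, List.length_replicate,
      List.getElem_replicate, zero_add, one_mul, List.getElem_cons]
    simp at h1
    split_ifs with hi h3 h4 h5
    · exact hA i hi
    · rw [show i = hQ q by omega]; assumption
    · rw [← hB (i - hQ q - 1) h4]; congr 1; omega
    · rw [show i = 2 * hQ q + 1 by omega]
    · omega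

/-- Value of a finite continued fraction. -/
noncomputable def eE (lam : ℝ) : List ℤ → ℝ
  | [] => 0
  | b :: E => -1 / (b * lam + eE lam E)

/-- Validity of a boundary word. -/
def ValidE (lam : ℝ) : List ℤ → Prop
  | [] => True
  | b :: E => eE lam E ≤ 0 ∧ 0 < b * lam + eE lam E ∧ ValidE lam E

/-- Admissibility with respect to a boundary word. -/
def Adm : List ℤ → (ℕ → ℤ) → Prop
  | [], A => A 0 < 0
  | b :: E, A => A 0 < 0 ∨ b < A 0 ∨ (A 0 = b ∧ Adm E (fun i => A (i + 1)))

lemma eE_nonpos {lam : ℝ} {E : List ℤ} (h : ValidE lam E) : eE lam E ≤ 0 := by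
  cases E with
  | nil => simp [eE]
  | cons b E =>
    obtain ⟨-, h2, -⟩ := h
    rw [eE]
    exact div_nonpos_of_nonpos_of_nonneg (by norm_num) h2.le

lemma Adm_ones (F : List ℤ) (k : ℕ) : ∀ A : ℕ → ℤ, (∀ i, A i ≠ 0) →
    ((∀ i < k, A i = 1) → Adm F (fun i => A (k + i))) → Adm (List.replicate k 1 ++ F) A := by
  induction k with
  | zero => intro A _ h; simpa using h
  | succ k ih =>
    intro A h0 h
    rw [List.replicate_succ, List.cons_append]
    by_cases h1 : A 0 = 1
    · refine Or.inr (Or.inr ⟨h1, ih _ (fun i => h0 _) fun hi => ?_⟩)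
      have := h (fun i hik => by
        rcases i with _ | i
        · exact h1
        · exact hi i (by omega))
      convert this using 2
      congr 1; ring
    · have := h0 0
      rcases lt_or_ge (A 0) 0 with h2 | h2
      · exact Or.inl h2
      · exact Or.inr (Or.inl (by omega))

lemma eE_ones {q : ℕ} (hq : 3 ≤ q) (j : ℕ) (hj : j + 1 < q) :
    eE (lamq q) (List.replicate j 1) = -sg q j / sg q (j + 1) ∧
      ValidE (lamq q) (List.replicate j 1) := by
  induction j with
  | zero => simp [eE, ValidE, sg_zero]
  | succ j ih =>
    obtain ⟨h1, h2⟩ := ih (by omega)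
    have p1 : 0 < sg q (j + 1) := sg_pos hq (by omega) (by omega)
    have p2 : 0 < sg q (j + 2) := sg_pos hq (by omega) (by omega)
    have hr := sg_rec (q := q) j
    have e : ((1 : ℤ) : ℝ) * lamq q + eE (lamq q) (List.replicate j 1) =
        sg q (j + 2) / sg q (j + 1) := by
      rw [h1, hr]; field_simp; push_cast; ring
    rw [List.replicate_succ]
    refine ⟨?_, eE_nonpos h2, ?_, h2⟩
    · rw [eE, e]; field_simp
    · rw [e]; positivity

lemma eE_odd {q : ℕ} (hq : 3 ≤ q) (hh : q = 2 * hQ q + 3) (j : ℕ) (hj : j ≤ hQ q) :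
    eE (lamq q) (List.replicate j 1 ++ 2 :: List.replicate (hQ q) 1) =
        -(sg q (j + 1) + sg q j) / (sg q (j + 2) + sg q (j + 1)) ∧
      ValidE (lamq q) (List.replicate j 1 ++ 2 :: List.replicate (hQ q) 1) := by
  have hl1 := one_le_lamq hq
  induction j with
  | zero =>
    obtain ⟨h1, h2⟩ := eE_ones hq (hQ q) (by omega)
    obtain ⟨s1, -, -, s4⟩ := sg_odd hq hh
    have e : eE (lamq q) (List.replicate (hQ q) 1) = -(lamq q - 1) := by
      rw [h1, s1]; field_simp
    have hr := sg_rec (q := q) 0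
    rw [zero_add] at hr
    have e2 : ((2 : ℤ) : ℝ) * lamq q + eE (lamq q) (List.replicate (hQ q) 1) = lamq q + 1 := by
      rw [e]; push_cast; ring
    simp only [List.replicate_zero, List.nil_append]
    refine ⟨?_, eE_nonpos h2, ?_, h2⟩
    · rw [eE, e2, zero_add, hr, zero_add, sg_one hq, sg_zero]; simp
    · rw [e2]; linarith
  | succ j ih =>
    obtain ⟨h1, h2⟩ := ih (by omega)
    have p1 : 0 < sg q (j + 1) := sg_pos hq (by omega) (by omega)
    have p2 : 0 < sg q (j + 2) := sg_pos hq (by omega) (by omega)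
    have p3 : 0 < sg q (j + 3) := sg_pos hq (by omega) (by omega)
    have hr := sg_rec (q := q) j
    have hr2 := sg_rec (q := q) (j + 1)
    have e : ((1 : ℤ) : ℝ) * lamq q +
        eE (lamq q) (List.replicate j 1 ++ 2 :: List.replicate (hQ q) 1) =
        (sg q (j + 3) + sg q (j + 2)) / (sg q (j + 2) + sg q (j + 1)) := by
      rw [h1, eq_div_iff (by positivity), add_mul, div_mul_cancel₀ _ (by positivity)]
      push_cast
      linear_combination -hr - hr2
    rw [List.replicate_succ, List.cons_append]
    refine ⟨?_, eE_nonpos h2, ?_, h2⟩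
    · rw [eE, e]; field_simp
    · rw [e]; positivity

lemma exists_E {q : ℕ} (hq : 3 ≤ q) : ∃ E, ValidE (lamq q) E ∧ eE (lamq q) E = -(lamq q / 2) ∧
    ∀ A, Good q A → Adm E A := by
  rcases parity hq with ⟨he, hh, h1⟩ | ⟨he, hh⟩
  · obtain ⟨h1, h2⟩ := eE_ones hq (hQ q) (by omega)
    obtain ⟨s1, -, s3⟩ := sg_even hq hh
    refine ⟨_, h2, ?_, fun A hA => ?_⟩
    · rw [h1, s1]; field_simp
    · rw [← List.append_nil (List.replicate _ _)]
      exact Adm_ones [] _ A hA.1 fun h => reg_even he hA h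
  · obtain ⟨h1, h2⟩ := eE_odd hq hh (hQ q) le_rfl
    obtain ⟨s1, s2, -, s4⟩ := sg_odd hq hh
    refine ⟨_, h2, ?_, fun A hA => ?_⟩
    · rw [h1, s1, s2]; field_simp; ring
    · apply Adm_ones _ _ A hA.1
      intro hi
      have hn := hA.1 (hQ q)
      have hn1 : A (hQ q) ≠ 1 := fun h => reg_ones hA fun i hi2 => by
        rcases Nat.lt_succ_iff_lt_or_eq.mp hi2 with h3 | h3
        · exact hi i h3
        · rw [h3]; exact h
      rw [Adm]
      simp only [add_zero]
      by_cases h2 : A (hQ q) = 2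
      · refine Or.inr (Or.inr ⟨h2, ?_⟩)
        rw [← List.append_nil (List.replicate _ _)]
        apply Adm_ones [] _ _ (fun i => hA.1 _)
        intro h3
        have := reg_odd he hA hi h2 (fun i hi3 => by
          rw [← h3 i hi3]; congr 1; ring)
        rw [Adm]
        convert this using 2
        ring
      · omega

lemma vv_bound {q : ℕ} (hq : 3 ≤ q) (n : ℕ) : ∀ A, Good q A → |vv (lamq q) n A| ≤ lamq q / 2 ∧
    ∀ E, ValidE (lamq q) E → Adm E A → eE (lamq q) E ≤ vv (lamq q) n A := by
  have hl1 := one_le_lamq hq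
  induction n with
  | zero =>
    intro A _
    simp only [vv, abs_zero]
    exact ⟨by linarith, fun E hE _ => eE_nonpos hE⟩
  | succ n ih =>
    have low : ∀ A, Good q A → ∀ E, ValidE (lamq q) E → Adm E A →
        eE (lamq q) E ≤ vv (lamq q) (n + 1) A := by
      intro A hA E hE hAd
      obtain ⟨i1, i2⟩ := ih _ (Good_shift hA)
      rw [abs_le] at i1
      rw [vv]
      set w := vv (lamq q) n (fun i => A (i + 1)) with hw
      by_cases h0 : A 0 < 0
      · refine le_trans (eE_nonpos hE) (div_nonneg_of_nonpos (by norm_num) ?_)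
        have : (A 0 : ℝ) ≤ -1 := by exact_mod_cast Int.le_sub_one_of_lt h0
        nlinarith
      · cases E with
        | nil => exact absurd hAd h0
        | cons b E =>
          obtain ⟨v1, v2, v3⟩ := hE
          rw [eE, neg_div, neg_div]
          apply neg_le_neg
          apply one_div_le_one_div_of_le v2
          rcases hAd with h | h | ⟨h, h'⟩
          · exact absurd h h0
          · have : (b : ℝ) + 1 ≤ A 0 := by exact_mod_cast h
            nlinarith
          · have := i2 E v3 h'
            rw [h]; linarith
    obtain ⟨E, hE1, hE2, hE3⟩ := exists_E hq
    intro A hA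
    refine ⟨?_, low A hA⟩
    have a1 := low A hA E hE1 (hE3 A hA)
    have a2 := low _ (Good_neg hA) E hE1 (hE3 _ (Good_neg hA))
    rw [vv_neg] at a2
    rw [hE2] at a1 a2
    rw [abs_le]
    constructor <;> linarith

lemma cf_val {q : ℕ} (hq : 3 ≤ q) (n : ℕ) : ∀ A, Good q (fun i => A (i + 1)) →
    cfQ (lamq q) A n ≠ 0 ∧ cfP (lamq q) A n / cfQ (lamq q) A n =
      A 0 * lamq q + vv (lamq q) n (fun i => A (i + 1)) := by
  have hl1 := one_le_lamq hq
  induction n with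
  | zero => intro A _; simp [cfP, cfQ, vv]
  | succ n ih =>
    intro A hA
    obtain ⟨i1, i2⟩ := ih _ (Good_shift hA)
    obtain ⟨c1, c2⟩ := (cf_shift (lamq q) A n).1
    have hb := (vv_bound hq n _ (Good_shift hA)).1
    have h0 := hA.1 0
    simp only [zero_add] at *
    rw [c1, c2, vv]
    simp only [zero_add]
    rw [← i2]
    have hne : cfP (lamq q) (fun i => A (i + 1)) n / cfQ (lamq q) (fun i => A (i + 1)) n ≠ 0 := by
      rw [i2]
      intro h
      have h1 : (1 : ℝ) ≤ |(A 1 : ℝ)| := by exact_mod_cast Int.one_le_abs h0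
      have h2 : (A 1 : ℝ) * lamq q = -vv (lamq q) n (fun i => A (i + 1 + 1)) := by linarith
      have h3 := congrArg abs h2
      rw [abs_mul, abs_neg, abs_of_pos (by linarith : 0 < lamq q)] at h3
      nlinarith
    have hP : cfP (lamq q) (fun i => A (i + 1)) n ≠ 0 := fun h => hne (by rw [h, zero_div])
    refine ⟨hP, ?_⟩
    field_simp
    ring

lemma HR_iff {q : ℕ} (hq : 3 ≤ q) (x : ℝ) (A : ℕ → ℤ) :
    HasRegCF q x A ↔ Good q (fun i => A (i + 1)) ∧
      Tendsto (fun n => vv (lamq q) n (fun i => A (i + 1))) atTop (𝓝 (x - A 0 * lamq q)) := by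
  constructor
  · rintro ⟨h1, h2, h3, h4⟩
    refine ⟨⟨h1, h2⟩, ?_⟩
    have := h4.sub_const (A 0 * lamq q)
    refine this.congr fun n => ?_
    rw [(cf_val hq n A ⟨h1, h2⟩).2]; ring
  · rintro ⟨h1, h2⟩
    refine ⟨h1.1, h1.2, fun n => (cf_val hq n A h1).1, ?_⟩
    have := h2.const_add (A 0 * lamq q)
    rw [add_sub_cancel] at this
    refine this.congr fun n => ?_
    rw [(cf_val hq n A h1).2]

lemma HR_unique {q : ℕ} {x y : ℝ} {A : ℕ → ℤ} (hx : HasRegCF q x A) (hy : HasRegCF q y A) :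
    x = y := tendsto_nhds_unique hx.2.2.2 hy.2.2.2

lemma HR_upd {q : ℕ} (hq : 3 ≤ q) {x : ℝ} {A : ℕ → ℤ} (hx : HasRegCF q x A) (k : ℤ) :
    HasRegCF q (x + k * lamq q) (upd A k) := by
  rw [HR_iff hq] at hx ⊢
  have e : (fun i => upd A k (i + 1)) = fun i => A (i + 1) := by funext i; simp [upd]
  rw [e]
  refine ⟨hx.1, ?_⟩
  convert hx.2 using 2
  simp [upd]; ring

lemma HR_neg {q : ℕ} (hq : 3 ≤ q) {x : ℝ} {A : ℕ → ℤ} (hx : HasRegCF q x A) :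
    HasRegCF q (-x) (fun i => -A i) := by
  rw [HR_iff hq] at hx ⊢
  refine ⟨Good_neg hx.1, ?_⟩
  have := hx.2.neg
  convert this using 2
  · exact vv_neg _ _ _
  · push_cast; ring

lemma HR_step {q : ℕ} (hq : 3 ≤ q) {x : ℝ} {A : ℕ → ℤ} (hx : HasRegCF q x A) :
    |x - A 0 * lamq q| ≤ lamq q / 2 ∧ x ≠ A 0 * lamq q ∧
      HasRegCF q (-1 / (x - A 0 * lamq q)) (fun i => A (i + 1)) := by
  have hl1 := one_le_lamq hq
  rw [HR_iff hq] at hx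
  obtain ⟨hg, ht⟩ := hx
  set u := x - A 0 * lamq q with hu
  have hg' := Good_shift hg
  -- the shifted values
  have ht' := (tendsto_add_atTop_iff_nat 1).mpr ht
  have hw : ∀ n, |vv (lamq q) n (fun i => A (i + 1 + 1))| ≤ lamq q / 2 :=
    fun n => (vv_bound hq n _ hg').1
  have h0 := hg.1 0
  simp only [zero_add] at h0
  have h1 : (1 : ℝ) ≤ |(A 1 : ℝ)| := by exact_mod_cast Int.one_le_abs h0
  have hM : 0 < (|(A 1 : ℝ)| + 1) * lamq q := by positivity
  have hden : ∀ n, |(A 1 : ℝ) * lamq q + vv (lamq q) n (fun i => A (i + 1 + 1))| ≤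
      (|(A 1 : ℝ)| + 1) * lamq q ∧
      (A 1 : ℝ) * lamq q + vv (lamq q) n (fun i => A (i + 1 + 1)) ≠ 0 := by
    intro n
    have hwn := hw n
    constructor
    · refine (abs_add_le _ _).trans ?_
      rw [abs_mul, abs_of_pos (by linarith : 0 < lamq q)]
      nlinarith
    · intro h
      have h2 : (A 1 : ℝ) * lamq q = -vv (lamq q) n (fun i => A (i + 1 + 1)) := by linarith
      have h3 := congrArg abs h2
      rw [abs_mul, abs_neg, abs_of_pos (by linarith : 0 < lamq q)] at h3
      nlinarith
  have hvv : ∀ n, vv (lamq q) (n + 1) (fun i => A (i + 1)) =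
      -1 / ((A 1 : ℝ) * lamq q + vv (lamq q) n (fun i => A (i + 1 + 1))) := fun n => rfl
  have habs : 1 / ((|(A 1 : ℝ)| + 1) * lamq q) ≤ |u| := by
    refine ge_of_tendsto' ht'.abs fun n => ?_
    rw [hvv, abs_div, abs_neg, abs_one]
    exact one_div_le_one_div_of_le (abs_pos.mpr (hden n).2) (hden n).1
  have hu0 : u ≠ 0 := by
    intro h
    rw [h, abs_zero] at habs
    have : 0 < 1 / ((|(A 1 : ℝ)| + 1) * lamq q) := by positivity
    linarith
  refine ⟨?_, ?_, ?_⟩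
  · exact le_of_tendsto' ht.abs fun n => (vv_bound hq n _ hg).1
  · intro h; apply hu0; rw [hu, h, sub_self]
  · rw [HR_iff hq]
    refine ⟨hg', ?_⟩
    have h5 : Tendsto (fun n => -1 / vv (lamq q) (n + 1) (fun i => A (i + 1)) -
        (A 1 : ℝ) * lamq q) atTop (𝓝 (-1 / u - (A 1 : ℝ) * lamq q)) :=
      ((tendsto_const_nhds (x := (-1 : ℝ))).div ht' hu0).sub_const _
    refine h5.congr fun n => ?_
    have := (hden n).2
    rw [hvv]
    field_simp
    ring

/-- The tails of the orbit. -/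
noncomputable def orbX (lam x : ℝ) (A : ℕ → ℤ) : ℕ → ℝ
  | 0 => x
  | n + 1 => -1 / (orbX lam x A n - A n * lam)

lemma HR_tail {q : ℕ} (hq : 3 ≤ q) {x : ℝ} {A : ℕ → ℤ} (hx : HasRegCF q x A) (n : ℕ) :
    HasRegCF q (orbX (lamq q) x A n) (fun k => A (n + k)) := by
  induction n with
  | zero => simpa [orbX] using hx
  | succ n ih =>
    have := (HR_step hq ih).2.2
    simp only [add_zero] at this
    rw [orbX]
    convert this using 2
    congr 1; ring

lemma HR_Orb {q : ℕ} (hq : 3 ≤ q) {x : ℝ} {A : ℕ → ℤ} (hx : HasRegCF q x A) :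
    Orb (lamq q) x A := by
  refine ⟨orbX (lamq q) x A, rfl, fun n => ?_⟩
  obtain ⟨h1, h2, -⟩ := HR_step hq (HR_tail hq hx n)
  exact ⟨h1, h2, rfl⟩

lemma Gq_tail {q : ℕ} (hq : 3 ≤ q) {x : ℝ} {A : ℕ → ℤ} (hx : HasRegCF q x A) (n : ℕ) :
    GqEquiv q x (orbX (lamq q) x A n) := by
  induction n with
  | zero => exact Gq_refl q x
  | succ n ih =>
    obtain ⟨h1, h2, -⟩ := HR_step hq (HR_tail hq hx n)
    simp only [add_zero] at h2
    refine Gq_trans ih (Gq_trans (Gq_Tk _ (-A n)) ?_)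
    rw [orbX]
    have e : orbX (lamq q) x A n + ((-A n : ℤ) : ℝ) * lamq q =
        orbX (lamq q) x A n - A n * lamq q := by push_cast; ring
    rw [e]
    exact Gq_S (sub_ne_zero.mpr h2)

lemma HR_ones {q : ℕ} (hq : 3 ≤ q) {x : ℝ} {A : ℕ → ℤ} (hx : HasRegCF q x A) (j : ℕ)
    (hA : ∀ i < j, A i = 1) : sg q (j + 1) - sg q j * x ≠ 0 ∧
      HasRegCF q (lamq q + tj q j x) (fun i => A (j + i)) := by
  induction j with
  | zero =>
    have hr := sg_rec (q := q) 0
    rw [zero_add] at hr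
    simp only [tj, zero_add, sg_zero, sg_one hq, hr]
    refine ⟨by simp, ?_⟩
    convert hx using 1
    ring
  | succ j ih =>
    obtain ⟨i1, i2⟩ := ih fun i hi => hA i (by omega)
    obtain ⟨-, s2, s3⟩ := HR_step hq i2
    simp only [add_zero, hA j (by omega), Int.cast_one, one_mul, add_sub_cancel_left] at s2 s3
    have ht : tj q j x ≠ 0 := fun h => s2 (by rw [h, add_zero])
    have hn : sg q (j + 1) * x - sg q (j + 2) ≠ 0 := fun h => ht (by rw [tj, h, zero_div])
    have hd : sg q (j + 2) - sg q (j + 1) * x ≠ 0 := fun h => hn (by linarith)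
    refine ⟨hd, ?_⟩
    have hr := sg_rec (q := q) j
    have hr2 := sg_rec (q := q) (j + 1)
    have e : -1 / tj q j x = lamq q + tj q (j + 1) x := by
      simp only [tj]
      rw [div_div_eq_mul_div, div_eq_iff hn]
      have : (sg q (j + 1 + 1) * x - sg q (j + 1 + 2)) / (sg q (j + 1 + 1) - sg q (j + 1) * x) *
          (sg q (j + 1) * x - sg q (j + 2)) = -(sg q (j + 1 + 1) * x - sg q (j + 1 + 2)) := by
        rw [div_mul_eq_mul_div, div_eq_iff hd]; ring
      rw [add_mul, this]
      linear_combination x * hr - hr2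
    rw [← e]
    convert s3 using 2
    congr 1; ring

/-! ## The exceptional orbit -/

lemma tailX {q : ℕ} (hq : 3 ≤ q) {x : ℝ} {A : ℕ → ℤ} (hx : HasRegCF q x A)
    (hA : CommonTail A (rho q)) : ∃ X B, GqEquiv q x X ∧ GqEquiv q (-x) (-X) ∧
      HasRegCF q X B ∧ B 0 = 1 ∧ ∀ k, B (k + 1) = rho q k := by
  obtain ⟨m, n, h⟩ := hA
  set p := (rhoBlock q).length with hp
  have hp1 : 1 ≤ p := by
    rw [hp, rhoBlock]; split_ifs <;> simp <;> omega
  have hper : ∀ N k, rho q (p * N + k) = rho q k := by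
    intro N k
    simp only [rho]
    rw [← hp, Nat.mul_add_mod]
  have hge : n + 1 ≤ p * (n + 1) := by nlinarith
  set M := m + (p * (n + 1) - 1 - n) with hM
  have hT := HR_tail hq hx M
  have hN := HR_neg hq hx
  have hTN := HR_tail hq hN M
  have e1 := HR_unique hTN (HR_neg hq hT)
  have g1 := Gq_tail hq hx M
  have g2 := Gq_tail hq hN M
  rw [e1] at g2
  refine ⟨_, _, Gq_trans g1 (Gq_Tk _ (1 - A M)), ?_, HR_upd hq hT (1 - A M), ?_, fun k => ?_⟩
  · refine Gq_trans g2 ?_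
    convert Gq_Tk (q := q) (-orbX (lamq q) x A M) (-(1 - A M)) using 1
    push_cast; ring
  · simp [upd]
  · simp only [upd]
    rw [if_neg (by omega)]
    have h3 := h (p * (n + 1) - 1 - n + 1 + k)
    rw [show n + (p * (n + 1) - 1 - n + 1 + k) = p * (n + 1) + k by omega, hper] at h3
    rw [← h3]
    congr 1; omega

lemma X_neg_even {q : ℕ} (hq : 3 ≤ q) (he : Even q) (hh : q = 2 * hQ q + 2) (h1 : 1 ≤ hQ q)
    {X : ℝ} {B : ℕ → ℤ} (hX : HasRegCF q X B) (hB0 : B 0 = 1) (hB : ∀ k, B (k + 1) = rho q k) :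
    GqEquiv q X (-X) := by
  have hl1 := one_le_lamq hq
  have hl2 := lamq_lt_two hq
  obtain ⟨s1, -, s3⟩ := sg_even hq hh
  obtain ⟨a1, a2⟩ := HR_ones hq hX (hQ q) (by
    intro i hi
    rcases i with _ | i
    · exact hB0
    · rw [hB, rho_even hq he h1, if_pos]
      rw [Nat.mod_eq_of_lt (by omega)]; omega)
  have a3 := HR_upd hq hX 1
  have e : (fun i => B (hQ q + i)) = upd B 1 := by
    funext i
    simp only [upd]
    split_ifs with hi
    · rw [hi, hB0, add_zero, show hQ q = hQ q - 1 + 1 by omega, hB, rho_even hq he h1, if_neg]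
      · rfl
      · rw [Nat.mod_eq_of_lt (by omega)]; omega
    · obtain ⟨k, rfl⟩ : ∃ k, i = k + 1 := ⟨i - 1, by omega⟩
      rw [hB, ← add_assoc, hB, rho_even hq he h1, rho_even hq he h1, Nat.add_mod_left]
  rw [e] at a2
  have a4 := HR_unique a2 a3
  rw [tj_even hq hh] at a4
  have hne : 1 - lamq q / 2 * X ≠ 0 := by
    intro h
    apply a1
    rw [s1]
    linear_combination sg q (hQ q + 1) * h
  have a5 : (X - lamq q / 2) / (1 - lamq q / 2 * X) = X := by
    push_cast at a4; linarith
  rw [div_eq_iff hne] at a5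
  have a6 : X * X = 1 := by
    have : lamq q / 2 * (X * X - 1) = 0 := by linear_combination a5
    rcases mul_eq_zero.mp this with h | h
    · linarith
    · linarith
  have hX0 : X ≠ 0 := by rintro rfl; norm_num at a6
  convert Gq_S (q := q) hX0 using 1
  rw [eq_div_iff hX0]; linarith

lemma X_neg_odd {q : ℕ} (hq : 3 ≤ q) (he : ¬ Even q) (hh : q = 2 * hQ q + 3)
    {X : ℝ} {B : ℕ → ℤ} (hX : HasRegCF q X B) (hB0 : B 0 = 1) (hB : ∀ k, B (k + 1) = rho q k) :
    GqEquiv q X (-X) := by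
  have hl1 := one_le_lamq hq
  have hl2 := lamq_lt_two hq
  obtain ⟨s1, s2, -, s4⟩ := sg_odd hq hh
  have rho1 : ∀ i < 2 * hQ q, i ≠ hQ q → rho q i = 1 := by
    intro i hi hn
    rw [rho_odd hq he, if_neg (by omega), if_neg]
    rw [Nat.mod_eq_of_lt (by omega)]; omega
  obtain ⟨a1, a2⟩ := HR_ones hq hX (hQ q + 1) (by
    intro i hi
    rcases i with _ | i
    · exact hB0
    · rw [hB]; exact rho1 i (by omega) (by omega))
  have b1 := HR_upd hq a2 (-1)
  set t := tj q (hQ q + 1) X with ht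
  rw [show lamq q + t + ((-1 : ℤ) : ℝ) * lamq q = t by push_cast; ring] at b1
  set T := upd (fun i => B (hQ q + 1 + i)) (-1) with hT
  have hT0 : T 0 = rho q (hQ q) - 1 := by
    simp only [hT, upd, if_true, add_zero, hB]; ring
  have hTs : ∀ i, T (i + 1) = rho q (hQ q + (i + 1)) := by
    intro i
    simp only [hT, upd]
    rw [if_neg (by omega), ← hB]
    congr 1; ring
  have hTh : T (hQ q) = 2 := by
    by_cases h0 : hQ q = 0
    · rw [h0, hT0, rho_odd hq he, if_pos (by omega)]; norm_num
    · have := hTs (hQ q - 1)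
      rw [show hQ q - 1 + 1 = hQ q by omega] at this
      rw [this, rho_odd hq he, if_neg (by omega), if_pos]
      right
      rw [Nat.mod_eq_of_lt (by omega)]; omega
  obtain ⟨c1, c2⟩ := HR_ones hq b1 (hQ q) (by
    intro i hi
    rcases i with _ | i
    · rw [hT0, rho_odd hq he, if_neg (by omega), if_pos]
      · norm_num
      · left; exact Nat.mod_eq_of_lt (by omega)
    · rw [hTs]; exact rho1 _ (by omega) (by omega))
  have e : (fun i => T (hQ q + i)) = upd B 1 := by
    funext i
    simp only [upd]
    split_ifs with hi
    · rw [hi, hB0, add_zero, hTh]; norm_num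
    · obtain ⟨k, rfl⟩ : ∃ k, i = k + 1 := ⟨i - 1, by omega⟩
      rw [hB, ← add_assoc, hTs, rho_odd hq he, rho_odd hq he,
        show hQ q + (hQ q + k + 1) = (2 * hQ q + 1) + k by ring, Nat.add_mod_left]
  rw [e] at c2
  have d1 := HR_unique c2 (HR_upd hq hX 1)
  rw [tj_odd2 hq hh] at d1
  rw [tj_odd1 hq hh] at ht
  have n1 : 1 - X ≠ 0 := by
    intro h
    apply a1
    rw [show hQ q + 1 + 1 = hQ q + 2 by ring, s2]
    linear_combination sg q (hQ q + 1) * h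
  have n2 : 1 - (lamq q - 1) * t ≠ 0 := by
    intro h
    apply c1
    rw [s1]
    linear_combination sg q (hQ q + 1) * h
  have d2 : (t - 1) / (1 - (lamq q - 1) * t) = X := by
    push_cast at d1; linarith
  rw [div_eq_iff n2] at d2
  rw [eq_div_iff n1] at ht
  have a6 : t * X = 1 := by
    have : lamq q * (t * X - 1) = 0 := by linear_combination d2 - ht
    rcases mul_eq_zero.mp this with h | h
    · linarith
    · linarith
  have ht0 : t ≠ 0 := by rintro h; rw [h] at a6; norm_num at a6
  have g1 : GqEquiv q X t := by
    refine Gq_trans (Gq_tail hq hX (hQ q + 1)) ?_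
    have := HR_unique (HR_tail hq hX (hQ q + 1)) a2
    rw [this, add_comm]
    exact Gq_symm (Gq_T t)
  refine Gq_trans g1 ?_
  convert Gq_S (q := q) ht0 using 1
  rw [eq_div_iff ht0]; linarith

lemma X_neg {q : ℕ} (hq : 3 ≤ q) {X : ℝ} {B : ℕ → ℤ} (hX : HasRegCF q X B) (hB0 : B 0 = 1)
    (hB : ∀ k, B (k + 1) = rho q k) : GqEquiv q X (-X) := by
  rcases parity hq with ⟨he, hh, h1⟩ | ⟨he, hh⟩
  · exact X_neg_even hq he hh h1 hX hB0 hB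
  · exact X_neg_odd hq he hh hX hB0 hB

lemma Gq_exc {q : ℕ} (hq : 3 ≤ q) {x y : ℝ} {A B : ℕ → ℤ} (hx : HasRegCF q x A)
    (hy : HasRegCF q y B) (hA : CommonTail A (rho q))
    (hB : CommonTail B (fun i => -(rho q i))) : GqEquiv q x y := by
  have hB' := CT_neg hB
  simp only [neg_neg] at hB'
  obtain ⟨X, C, g1, -, hX, hC0, hC⟩ := tailX hq hx hA
  obtain ⟨Y, D, -, g2, hY, hD0, hD⟩ := tailX hq (HR_neg hq hy) hB'
  have e : C = D := by
    funext i
    rcases i with _ | i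
    · rw [hC0, hD0]
    · rw [hC, hD]
  subst e
  have := HR_unique hX hY
  subst this
  rw [neg_neg] at g2
  exact Gq_trans g1 (Gq_trans (X_neg hq hX hC0 hC) (Gq_symm g2))

lemma Gq_common {q : ℕ} (hq : 3 ≤ q) {x y : ℝ} {A B : ℕ → ℤ} (hx : HasRegCF q x A)
    (hy : HasRegCF q y B) (h : CommonTail A B) : GqEquiv q x y := by
  obtain ⟨m, n, h⟩ := h
  have h1 := HR_tail hq hx m
  have h2 := HR_tail hq hy n
  rw [show (fun k => A (m + k)) = fun k => B (n + k) from funext h] at h1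
  have e := HR_unique h1 h2
  have g1 := Gq_tail hq hx m
  rw [e] at g1
  exact Gq_trans g1 (Gq_symm (Gq_tail hq hy n))

/-- Two points with infinite regular `λ_q`-CF's are `G_q`-equivalent iff their expansions
have a common tail, or one has an expansion with the tail of `ρ_q` while the other has an
expansion with the tail of `-ρ_q`. -/
theorem stmt6 (q : ℕ) (hq : 3 ≤ q) (x y : ℝ)
    (hx : ∃ A, HasRegCF q x A) (hy : ∃ B, HasRegCF q y B) :
    GqEquiv q x y ↔
      ((∃ A B, HasRegCF q x A ∧ HasRegCF q y B ∧ CommonTail A B) ∨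
        (∃ A B, HasRegCF q x A ∧ HasRegCF q y B ∧
          CommonTail A (rho q) ∧ CommonTail B (fun i => -(rho q i))) ∨
        (∃ A B, HasRegCF q x A ∧ HasRegCF q y B ∧
          CommonTail A (fun i => -(rho q i)) ∧ CommonTail B (rho q))) := by
  constructor
  · rintro ⟨g, hg, -, rfl⟩
    obtain ⟨A, hA⟩ := hx
    obtain ⟨B, hB⟩ := hy
    obtain ⟨-, C, hC, hT⟩ := PG_all hq hg x A (HR_Orb hq hA)
    have e := Orb_unique hq hC (HR_Orb hq hB)
    subst e
    rcases hT with h | ⟨h1 | h1, h2 | h2⟩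
    · exact Or.inl ⟨A, C, hA, hB, h⟩
    · exact Or.inl ⟨A, C, hA, hB, CT_trans h1 (CT_symm h2)⟩
    · exact Or.inr (Or.inl ⟨A, C, hA, hB, h1, h2⟩)
    · exact Or.inr (Or.inr ⟨A, C, hA, hB, h1, h2⟩)
    · exact Or.inl ⟨A, C, hA, hB, CT_trans h1 (CT_symm h2)⟩
  · rintro (⟨A, B, hA, hB, h⟩ | ⟨A, B, hA, hB, h1, h2⟩ | ⟨A, B, hA, hB, h1, h2⟩)
    · exact Gq_common hq hA hB h
    · exact Gq_exc hq hA hB h1 h2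
    · exact Gq_symm (Gq_exc hq hB hA h2 h1)
end

section
/- Let q ≥ 3 be odd. The infinite λ_q-continued fraction [1; 3, 3, 3, …] for q = 3, respectively [1; (1)^{h_q}, 2, (1)^{h_q−1}, 2, (1)^{h_q}, 2, (1)^{h_q−1}, 2, …] for odd q ≥ 5 (a_0 = 1 followed by the periodic repetition of the block ((1)^{h_q}, 2, (1)^{h_q−1}, 2)), is regular and converges to a value R_q which satisfies R_q² + (2 − λ_q)·R_q = 1 and λ_q/2 < R_q ≤ 1. -/
open Filter Topology

theorem aux_conv (lam R B : ℝ) (A : ℕ → ℤ) (E : ℕ → ℝ) (hpos : ∀ m, 0 < E m)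
    (hB : ∀ m, E m ≤ B) (h1 : E 1 = ((A 0 : ℝ) * lam - R) * E 0)
    (hrec : ∀ m, E (m + 2) = (A (m + 1) : ℝ) * lam * E (m + 1) - E m) :
    CFConvergesTo lam A R := by
  have hBpos : 0 < B := lt_of_lt_of_le (hpos 0) (hB 0)
  -- error formula
  have herr : ∀ n, (cfP lam A n - R * cfQ lam A n) * E 0 = E (n + 1) ∧
      (cfP lam A (n + 1) - R * cfQ lam A (n + 1)) * E 0 = E (n + 2) := by
    intro n
    induction n with
    | zero =>
      have h2 := hrec 0
      simp only [zero_add] at h2 ⊢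
      refine ⟨by simp only [cfP, cfQ]; linarith, ?_⟩
      simp only [cfP, cfQ]
      rw [h2, h1]; ring
    | succ n ih =>
      refine ⟨ih.2, ?_⟩
      have h2 := hrec (n + 1)
      show (cfP lam A (n + 2) - R * cfQ lam A (n + 2)) * E 0 = E (n + 1 + 2)
      rw [h2]
      simp only [cfP, cfQ]
      have e1 := ih.1
      have e2 := ih.2
      rw [show n + 1 + 1 = n + 2 from rfl, ← e1, ← e2]; ring
  have hdet : ∀ n, E (n + 1) * cfQ lam A (n + 1) - E (n + 2) * cfQ lam A n = E 0 := by
    intro n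
    induction n with
    | zero =>
      have h2 := hrec 0
      simp only [zero_add] at h2 ⊢
      simp only [cfQ]
      rw [h2]; ring
    | succ n ih =>
      have h2 := hrec (n + 1)
      show E (n + 2) * cfQ lam A (n + 2) - E (n + 1 + 2) * cfQ lam A (n + 1) = E 0
      rw [h2]
      simp only [cfQ]
      rw [← ih]
      rw [show n + 1 + 1 = n + 2 from rfl]; ring
  have hw : ∀ n : ℕ, (n : ℝ) * (E 0 / B ^ 2) < cfQ lam A n / E (n + 1) := by
    intro n
    induction n with
    | zero =>
      simp only [cfQ]
      have := hpos 1
      simp only [zero_add, Nat.cast_zero, zero_mul]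
      positivity
    | succ n ih =>
      have hd := hdet n
      have p1 := hpos (n + 1)
      have p2 := hpos (n + 2)
      have e : cfQ lam A (n + 1) / E (n + 2)
          = cfQ lam A n / E (n + 1) + E 0 / (E (n + 1) * E (n + 2)) := by
        field_simp
        linarith
      show ((n + 1 : ℕ) : ℝ) * (E 0 / B ^ 2) < cfQ lam A (n + 1) / E (n + 2)
      rw [e]
      have : E 0 / B ^ 2 ≤ E 0 / (E (n + 1) * E (n + 2)) := by
        apply div_le_div_of_nonneg_left (hpos 0).le (by positivity)
        have := mul_le_mul (hB (n + 1)) (hB (n + 2)) p2.le hBpos.le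
        nlinarith
      push_cast
      linarith
  have hQ : ∀ n, 0 < cfQ lam A n := by
    intro n
    have h := hw n
    have h0 : (0 : ℝ) ≤ (n : ℝ) * (E 0 / B ^ 2) := by
      have := hpos 0
      positivity
    have h2 : 0 < cfQ lam A n / E (n + 1) := lt_of_le_of_lt h0 h
    have := mul_pos h2 (hpos (n + 1))
    rwa [div_mul_cancel₀ _ (hpos (n + 1)).ne'] at this
  refine ⟨fun n => (hQ n).ne', ?_⟩
  have hc : 0 < E 0 / B ^ 2 := by
    have := hpos 0
    positivity
  have htop : Tendsto (fun n : ℕ => cfQ lam A n / E (n + 1)) atTop atTop := by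
    refine tendsto_atTop_mono (fun n => (hw n).le) ?_
    exact Tendsto.atTop_mul_const hc tendsto_natCast_atTop_atTop
  have hinv := htop.inv_tendsto_atTop
  have h3 : Tendsto (fun n : ℕ => R + (E 0)⁻¹ * (cfQ lam A n / E (n + 1))⁻¹) atTop
      (nhds (R + (E 0)⁻¹ * 0)) := (hinv.const_mul _).const_add _
  rw [mul_zero, add_zero] at h3
  refine h3.congr ?_
  intro n
  have e := (herr n).1
  have := hpos 0
  have := hQ n
  have := hpos (n + 1)
  rw [inv_div]
  field_simp
  rw [← e]; ring

theorem aux_rho (q h : ℕ) (hq : q = 2 * h + 3) (i : ℕ) :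
    rho q i = 1 + (if i % (2 * h + 1) = h then 1 else 0)
      + (if i % (2 * h + 1) = 2 * h then 1 else 0) := by
  have hne : ¬ Even q := by
    rw [hq]; simp [Nat.even_add, Nat.even_mul]; decide
  have hh : hQ q = h := by
    simp only [hQ, if_neg hne]; omega
  unfold rho rhoBlock
  rcases Nat.eq_zero_or_pos h with h0 | h0
  · subst h0
    subst hq
    simp [Nat.mod_one]
  · rw [if_neg (by omega), if_neg hne, hh]
    have hl : (List.replicate h (1 : ℤ) ++ 2 :: (List.replicate (h - 1) 1 ++ [2])).length
        = 2 * h + 1 := by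
      simp; omega
    rw [hl]
    have hr : i % (2 * h + 1) < 2 * h + 1 := Nat.mod_lt _ (by omega)
    generalize i % (2 * h + 1) = r at hr
    rw [List.getD_eq_getElem?_getD]
    rcases lt_trichotomy r h with h1 | h1 | h1
    · rw [List.getElem?_append_left (by simpa using h1), if_neg (by omega), if_neg (by omega)]
      simp [h1]
    · rw [List.getElem?_append_right (by simp; omega), if_pos h1, if_neg (by omega)]
      simp [h1]
    · rw [List.getElem?_append_right (by simp; omega), if_neg (by omega)]
      obtain ⟨k, rfl⟩ : ∃ k, r = h + 1 + k := ⟨r - (h + 1), by omega⟩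
      rw [List.length_replicate, show h + 1 + k - h = k + 1 by omega, List.getElem?_cons_succ]
      by_cases h2 : k < h - 1
      · rw [List.getElem?_append_left (by simpa using h2), if_neg (by omega)]
        simp [h2]
      · rw [List.getElem?_append_right (by simp; omega), if_pos (by omega)]
        have : k - (h - 1) = 0 := by omega
        simp [this]

theorem aux_regular (q h : ℕ) (hq : q = 2 * h + 3) : RegularSeq q (rho q) := by
  have hne : ¬ Even q := by
    rw [hq]; simp [Nat.even_add, Nat.even_mul]; decide
  have hh : hQ q = h := by
    simp only [hQ, if_neg hne]; omega
  have hpos : ∀ i, 1 ≤ rho q i := by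
    intro i
    rw [aux_rho q h hq]
    split_ifs <;> norm_num
  have hb : ∀ i, i % (2 * h + 1) = h → rho q i ≠ 1 := by
    intro i hi
    rw [aux_rho q h hq, if_pos hi]
    split_ifs <;> norm_num
  have hb2 : ∀ i, i % (2 * h + 1) = 2 * h → rho q i ≠ 1 := by
    intro i hi
    rw [aux_rho q h hq i]
    rw [if_pos hi]
    split_ifs <;> norm_num
  have hmod : ∀ l k : ℕ, l % (2 * h + 1) + k < 2 * h + 1 →
      (l + k) % (2 * h + 1) = l % (2 * h + 1) + k := by
    intro l k hk
    rw [Nat.add_mod, Nat.mod_eq_of_lt (show k < 2 * h + 1 by omega), Nat.mod_eq_of_lt hk]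
  intro l len hf
  obtain ⟨ε, hε, hf⟩ := hf
  rw [if_neg hne, hh] at hf
  have hr : l % (2 * h + 1) < 2 * h + 1 := Nat.mod_lt _ (by omega)
  -- get element equation
  have hget : ∀ (L : List ℤ), (List.ofFn fun j : Fin len => rho q (l + (j : ℕ))) = L →
      ∀ k x, L[k]? = some x → rho q (l + k) = x := by
    intro L hL k x hx
    rw [← hL, List.getElem?_ofFn] at hx
    split_ifs at hx
    simpa using hx
  rcases hf with hf | ⟨m, hm, hf⟩
  · have hg := hget _ hf
    have hall : ∀ k, k ≤ h → rho q (l + k) = ε := by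
      intro k hk
      apply hg
      rw [List.getElem?_replicate, if_pos (by omega)]
    have hε1 : ε = 1 := by
      have h1 := hall 0 (by omega)
      have h2 := hpos (l + 0)
      rcases hε with h | h
      · exact h
      · omega
    by_cases h1 : l % (2 * h + 1) ≤ h
    · refine hb (l + (h - l % (2 * h + 1))) ?_ ((hall _ (by omega)).trans hε1)
      rw [hmod _ _ (by omega)]; omega
    · refine hb2 (l + (2 * h - l % (2 * h + 1))) ?_ ((hall _ (by omega)).trans hε1)
      rw [hmod _ _ (by omega)]; omega
  · have hg := hget _ hf
    have hmid : rho q (l + h) = ε * 2 := by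
      apply hg
      rw [List.getElem?_append_right (by simp)]
      simp
    have hε1 : ε = 1 := by
      have h2 := hpos (l + h)
      rcases hε with h | h
      · exact h
      · subst h; omega
    have hall : ∀ k, k < h → rho q (l + k) = 1 := by
      intro k hk
      rw [← hε1]
      apply hg
      rw [List.getElem?_append_left (by simpa using hk), List.getElem?_replicate, if_pos hk]
    have hall2 : ∀ k, k < h → rho q (l + (h + 1 + k)) = 1 := by
      intro k hk
      rw [← hε1]
      apply hg
      rw [List.getElem?_append_right (by simp; omega), List.length_replicate,
        show h + 1 + k - h = k + 1 by omega, List.getElem?_cons_succ,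
        List.getElem?_append_left (by simpa using hk), List.getElem?_replicate, if_pos hk]
    rcases Nat.eq_zero_or_pos h with h0 | h0
    · rw [aux_rho q h hq] at hmid
      subst h0
      rw [hε1] at hmid
      simp [Nat.mod_one] at hmid
    · by_cases hr0 : l % (2 * h + 1) = 0
      · refine hb2 (l + (h + 1 + (h - 1))) ?_ (hall2 _ (by omega))
        rw [hmod _ _ (by omega)]; omega
      · by_cases h1 : l % (2 * h + 1) ≤ h
        · refine hb (l + (h - l % (2 * h + 1))) ?_ (hall _ (by omega))
          rw [hmod _ _ (by omega)]; omega
        · refine hb2 (l + (2 * h - l % (2 * h + 1))) ?_ (hall _ (by omega))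
          rw [hmod _ _ (by omega)]; omega

set_option maxHeartbeats 1600000 in
theorem aux_main (q h : ℕ) (hq : q = 2 * h + 3) (h0 : 1 ≤ h) (R : ℝ) (A : ℕ → ℤ)
    (hA0 : A 0 = 1) (hA : ∀ m, A (m + 1) = rho q m)
    (hl1 : 1 ≤ lamq q) (hR : R ^ 2 + (2 - lamq q) * R = 1)
    (hR0 : 0 < R) (hR1 : R < 1) : CFConvergesTo (lamq q) A R := by
  obtain ⟨θ, hθ⟩ : ∃ θ, θ = Real.pi / q := ⟨_, rfl⟩
  have hqpos : (0 : ℝ) < q := by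
    have : 0 < q := by omega
    exact_mod_cast this
  have hqr : (q : ℝ) = 2 * h + 3 := by rw [hq]; push_cast; ring
  have hθpi : (2 * (h : ℝ) + 3) * θ = Real.pi := by
    rw [hθ, ← hqr]; field_simp
  have hθpos : 0 < θ := by rw [hθ]; have := Real.pi_pos; positivity
  have hlam : lamq q = 2 * Real.cos θ := by rw [hθ]; rfl
  obtain ⟨lam, hlamdef⟩ : ∃ x, x = lamq q := ⟨_, rfl⟩
  rw [← hlamdef] at hl1 hR hlam ⊢
  have hsrec : ∀ x : ℝ, Real.sin ((x + 2) * θ)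
      = lam * Real.sin ((x + 1) * θ) - Real.sin (x * θ) := by
    intro x
    rw [show (x + 2) * θ = (x + 1) * θ + θ by ring, show x * θ = (x + 1) * θ - θ by ring,
      Real.sin_add, Real.sin_sub, hlam]
    ring
  obtain ⟨a, ha⟩ : ∃ a, a = Real.sin (((h : ℝ) + 1) * θ) := ⟨_, rfl⟩
  have ha2 : Real.sin (((h : ℝ) + 2) * θ) = a := by
    rw [ha, ← Real.sin_pi_sub, ← hθpi]; congr 1; ring
  have hah : Real.sin ((h : ℝ) * θ) = (lam - 1) * a := by
    have := hsrec h
    rw [ha2, ← ha] at this; linarith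
  have hah1 : Real.sin (((h : ℝ) - 1) * θ) = (lam ^ 2 - lam - 1) * a := by
    have := hsrec ((h : ℝ) - 1)
    rw [show (h : ℝ) - 1 + 2 = h + 1 by ring, show (h : ℝ) - 1 + 1 = h by ring, hah, ← ha] at this
    linarith
  have hspos : ∀ x : ℝ, 0 < x → x ≤ h + 2 → 0 < Real.sin (x * θ) := by
    intro x h1 h2
    apply Real.sin_pos_of_pos_of_lt_pi (by positivity)
    rw [← hθpi]
    have : (0 : ℝ) ≤ h := Nat.cast_nonneg h
    nlinarith
  have hapos : 0 < a := by
    rw [ha]; exact hspos _ (by positivity) (by linarith)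
  have hD : 0 < 1 + R * (lam - 1) := by
    have : 0 ≤ R * (lam - 1) := mul_nonneg hR0.le (by linarith)
    linarith
  obtain ⟨μ, hμ⟩ : ∃ μ, μ = (1 - R) / (1 + R * (lam - 1)) := ⟨_, rfl⟩
  have hμ' : μ * (1 + R * (lam - 1)) = 1 - R := by rw [hμ]; field_simp
  have hμpos : 0 < μ := by rw [hμ]; apply div_pos; linarith; exact hD
  have hμ1 : μ ≤ 1 := by
    rw [hμ, div_le_one hD]
    have : 0 ≤ R * (lam - 1) := mul_nonneg hR0.le (by linarith)
    linarith
  let P : ℕ → ℝ := fun r => Real.sin (((r : ℝ) + 1) * θ) - R * Real.sin ((r : ℝ) * θ)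
  let Q : ℕ → ℝ := fun r => μ * (Real.sin ((2 * (h : ℝ) + 1 - r + 1) * θ)
    + R * Real.sin ((2 * (h : ℝ) + 1 - r) * θ))
  let F : ℕ → ℝ := fun r => if r ≤ h then P r else Q r
  let E : ℕ → ℝ := fun m => μ ^ (m / (2 * h + 1)) * F (m % (2 * h + 1))
  have hPrec : ∀ r, P (r + 2) = lam * P (r + 1) - P r := by
    intro r
    have e1 := hsrec r
    have e2 := hsrec (r + 1)
    simp only [P]
    push_cast
    rw [e1, show ((r : ℝ) + 2 + 1) = (r : ℝ) + 1 + 2 by ring, e2,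
      show ((r : ℝ) + 1 + 1) = (r : ℝ) + 2 by ring, e1]
    ring
  have hQrec : ∀ r, Q (r + 2) = lam * Q (r + 1) - Q r := by
    intro r
    have e1 := hsrec (2 * (h : ℝ) + 1 - r - 2)
    have e2 := hsrec (2 * (h : ℝ) + 1 - r - 1)
    simp only [Q]
    push_cast
    ring_nf at e1 e2 ⊢
    rw [e2, e1]; ring
  have hPQ : Q (h + 1) = P (h + 1) := by
    simp only [Q, P]
    push_cast
    rw [show 2 * (h : ℝ) + 1 - (h + 1) + 1 = h + 1 by ring,
      show 2 * (h : ℝ) + 1 - (h + 1) = h by ring,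
      show (h : ℝ) + 1 + 1 = h + 2 by ring, ha2, ← ha, hah]
    linear_combination a * hμ'
  have hPQ2 : Q (h + 2) = 2 * lam * P (h + 1) - P h := by
    simp only [Q, P]
    push_cast
    rw [show 2 * (h : ℝ) + 1 - (h + 2) + 1 = h by ring,
      show 2 * (h : ℝ) + 1 - (h + 2) = h - 1 by ring,
      show (h : ℝ) + 1 + 1 = h + 2 by ring, ha2, ← ha, hah, hah1]
    apply mul_left_cancel₀ hD.ne'
    linear_combination a * (lam - 1 + R * (lam ^ 2 - lam - 1)) * hμ' + a * lam * hR
  have hs2 : Real.sin (2 * θ) = lam * Real.sin θ := by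
    rw [Real.sin_two_mul, hlam]; ring
  have hQN : Q (2 * h + 1) = μ * P 0 := by
    simp only [Q, P]
    push_cast
    simp
  have hQN2 : μ * P 1 = 2 * lam * Q (2 * h + 1) - Q (2 * h) := by
    simp only [Q, P]
    push_cast
    rw [show 2 * (h : ℝ) + 1 - (2 * h + 1) + 1 = 1 by ring,
      show 2 * (h : ℝ) + 1 - (2 * h + 1) = 0 by ring,
      show 2 * (h : ℝ) + 1 - 2 * h + 1 = 2 by ring,
      show 2 * (h : ℝ) + 1 - 2 * h = 1 by ring, show (1 : ℝ) + 1 = 2 by ring, hs2]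
    simp
    ring
  have hE : ∀ t r, r < 2 * h + 1 → E ((2 * h + 1) * t + r) = μ ^ t * F r := by
    intro t r hr
    simp only [E]
    rw [Nat.mul_add_div (by omega), Nat.div_eq_of_lt hr, Nat.mul_add_mod, Nat.mod_eq_of_lt hr,
      add_zero]
  have hEP : ∀ t r, r ≤ h + 1 → E ((2 * h + 1) * t + r) = μ ^ t * P r := by
    intro t r hr
    rw [hE t r (by omega)]
    simp only [F]
    split_ifs with h1
    · rfl
    · have : r = h + 1 := by omega
      rw [this, hPQ]
  have hEQ : ∀ t r, h + 1 ≤ r → r ≤ 2 * h + 1 → E ((2 * h + 1) * t + r) = μ ^ t * Q r := by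
    intro t r hr hr2
    rcases Nat.lt_or_ge r (2 * h + 1) with h1 | h1
    · rw [hE t r h1]
      simp only [F]
      rw [if_neg (by omega)]
    · have : r = 2 * h + 1 := by omega
      rw [this, hQN, show (2 * h + 1) * t + (2 * h + 1) = (2 * h + 1) * (t + 1) + 0 by ring,
        hEP _ _ (by omega)]
      ring
  have hPpos : ∀ r, r ≤ h → 0 < P r := by
    intro r hr
    have hr' : (r : ℝ) ≤ h := by exact_mod_cast hr
    have h1 : 0 < Real.sin (((r : ℝ) + 1) * θ) := hspos _ (by positivity) (by linarith)
    have h2 : Real.sin ((r : ℝ) * θ) ≤ Real.sin (((r : ℝ) + 1) * θ) := by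
      apply Real.sin_le_sin_of_le_of_le_pi_div_two
      · have : 0 ≤ (r : ℝ) * θ := by positivity
        have := Real.pi_pos
        linarith
      · rw [← hθpi]
        have := mul_le_mul_of_nonneg_right (show (r : ℝ) + 1 ≤ (2 * h + 3) / 2 by linarith) hθpos.le
        linarith
      · linarith
    simp only [P]
    have h3 := mul_le_mul_of_nonneg_left h2 hR0.le
    have h4 := mul_lt_mul_of_pos_right hR1 h1
    linarith
  have hQpos : ∀ r, h < r → r < 2 * h + 1 → 0 < Q r := by
    intro r hr hr2
    have hr' : (h : ℝ) + 1 ≤ r := by exact_mod_cast hr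
    have hr2' : (r : ℝ) + 1 ≤ 2 * h + 1 := by exact_mod_cast hr2
    have h1 := hspos (2 * (h : ℝ) + 1 - r + 1) (by linarith) (by linarith)
    have h2 := hspos (2 * (h : ℝ) + 1 - r) (by linarith) (by linarith)
    simp only [Q]
    positivity
  have hFpos : ∀ r, r < 2 * h + 1 → 0 < F r := by
    intro r hr
    simp only [F]
    split_ifs with h1
    · exact hPpos r h1
    · exact hQpos r (by omega) hr
  have hFB : ∀ r, F r ≤ 2 := by
    intro r
    simp only [F]
    split_ifs with h1
    · simp only [P]
      have e1 := Real.sin_le_one (((r : ℝ) + 1) * θ)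
      have e2 := Real.neg_one_le_sin ((r : ℝ) * θ)
      nlinarith
    · simp only [Q]
      have e1 := Real.sin_le_one ((2 * (h : ℝ) + 1 - r + 1) * θ)
      have e2 := Real.sin_le_one ((2 * (h : ℝ) + 1 - r) * θ)
      have e3 : Real.sin ((2 * (h : ℝ) + 1 - r + 1) * θ)
        + R * Real.sin ((2 * (h : ℝ) + 1 - r) * θ) ≤ 2 := by nlinarith
      nlinarith
  refine aux_conv lam R 2 A E ?_ ?_ ?_ ?_
  · intro m
    exact mul_pos (pow_pos hμpos _) (hFpos _ (Nat.mod_lt _ (by omega)))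
  · intro m
    have e1 : μ ^ (m / (2 * h + 1)) ≤ 1 := pow_le_one₀ hμpos.le hμ1
    have e2 := hFpos (m % (2 * h + 1)) (Nat.mod_lt _ (by omega))
    have e3 := hFB (m % (2 * h + 1))
    simp only [E]
    nlinarith
  · have e1 := hEP 0 0 (by omega)
    have e2 := hEP 0 1 (by omega)
    simp only [mul_zero, zero_add, pow_zero, one_mul] at e1 e2
    rw [e1, e2, hA0]
    simp only [P]
    push_cast
    rw [show (1 : ℝ) + 1 = 2 by ring, hs2]
    simp
    ring
  · intro m
    rw [hA, aux_rho q h hq]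
    have hdm : m = (2 * h + 1) * (m / (2 * h + 1)) + m % (2 * h + 1) := (Nat.div_add_mod _ _).symm
    have hr : m % (2 * h + 1) < 2 * h + 1 := Nat.mod_lt _ (by omega)
    generalize m / (2 * h + 1) = t at hdm
    generalize m % (2 * h + 1) = r at hdm hr
    subst hdm
    rw [show (2 * h + 1) * t + r + 2 = (2 * h + 1) * t + (r + 2) by ring,
      show (2 * h + 1) * t + r + 1 = (2 * h + 1) * t + (r + 1) by ring]
    rcases lt_trichotomy r h with h1 | h1 | h1
    · rw [if_neg (by omega), if_neg (by omega), hEP _ _ (by omega), hEP _ _ (by omega),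
        hEP _ _ (by omega), hPrec]
      push_cast; ring
    · subst h1
      rw [if_pos rfl, if_neg (by omega), hEQ _ _ (by omega) (by omega), hEP _ _ (by omega),
        hEP _ _ (by omega), hPQ2]
      push_cast; ring
    · rw [if_neg (by omega)]
      by_cases h2 : r = 2 * h
      · subst h2
        rw [if_pos rfl, hEQ _ (2 * h + 1) (by omega) (by omega),
          hEQ _ (2 * h) (by omega) (by omega),
          show (2 * h + 1) * t + (2 * h + 2) = (2 * h + 1) * (t + 1) + 1 by ring,
          hEP _ _ (by omega), pow_succ, mul_assoc, hQN2]
        push_cast; ring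
      · rw [if_neg h2, hEQ _ _ (by omega) (by omega), hEQ _ _ (by omega) (by omega),
          hEQ _ _ (by omega) (by omega), hQrec]
        push_cast; ring

/-- For odd `q ≥ 3` the infinite `λ_q`-CF `[1; ov(3)]` (for `q = 3`), respectively
`[1; ov((1)^{h_q}, 2, (1)^{h_q-1}, 2)]` (for odd `q ≥ 5`), is regular and converges to a
value `R_q` with `R_q² + (2 - λ_q)·R_q = 1` and `λ_q/2 < R_q ≤ 1`. -/
theorem stmt10 (q : ℕ) (hq : 3 ≤ q) (hqo : Odd q) (A : ℕ → ℤ)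
    (hA : A = fun n => if n = 0 then 1 else rho q (n - 1)) :
    (∀ i, A (i + 1) ≠ 0) ∧ RegularSeq q (fun i => A (i + 1)) ∧
      ∃ R : ℝ, CFConvergesTo (lamq q) A R ∧
        R ^ 2 + (2 - lamq q) * R = 1 ∧ lamq q / 2 < R ∧ R ≤ 1 := by
  obtain ⟨h, hh⟩ : ∃ h, q = 2 * h + 3 := by
    obtain ⟨k, hk⟩ := hqo
    exact ⟨k - 1, by omega⟩
  have hA0 : A 0 = 1 := by rw [hA]; simp
  have hAs : ∀ m, A (m + 1) = rho q m := by intro m; rw [hA]; simp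
  clear hA
  have hl1 : 1 ≤ lamq q := by
    have hq3 : (3 : ℝ) ≤ q := by exact_mod_cast hq
    have hpi := Real.pi_pos
    have : Real.cos (Real.pi / 3) ≤ Real.cos (Real.pi / q) := by
      apply Real.cos_le_cos_of_nonneg_of_le_pi
      · positivity
      · linarith
      · apply div_le_div_of_nonneg_left hpi.le (by norm_num) hq3
    rw [Real.cos_pi_div_three] at this
    unfold lamq
    linarith
  have hl2 : lamq q < 2 := by
    have hq3 : (3 : ℝ) ≤ q := by exact_mod_cast hq
    have hpi := Real.pi_pos
    have : Real.cos (Real.pi / q) < Real.cos 0 := by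
      apply Real.cos_lt_cos_of_nonneg_of_le_pi le_rfl
      · rw [div_le_iff₀ (by linarith)]; nlinarith
      · positivity
    rw [Real.cos_zero] at this
    unfold lamq
    linarith
  refine ⟨?_, ?_, ?_⟩
  · intro i
    rw [hAs, aux_rho q h hh]
    split_ifs <;> norm_num
  · have : (fun i => A (i + 1)) = rho q := funext hAs
    rw [this]
    exact aux_regular q h hh
  · obtain ⟨s, hs⟩ : ∃ s, s = Real.sqrt ((2 - lamq q) ^ 2 + 4) := ⟨_, rfl⟩
    have hs0 : 0 ≤ s := by rw [hs]; exact Real.sqrt_nonneg _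
    have hs2 : s ^ 2 = (2 - lamq q) ^ 2 + 4 := by rw [hs]; exact Real.sq_sqrt (by positivity)
    obtain ⟨R, hRdef⟩ : ∃ R, R = (lamq q - 2 + s) / 2 := ⟨_, rfl⟩
    have hR : R ^ 2 + (2 - lamq q) * R = 1 := by
      rw [hRdef]; linear_combination (1 / 4) * hs2
    have hR0 : 0 < R := by
      have : 2 - lamq q < s := by nlinarith
      rw [hRdef]; linarith
    have hRl : lamq q / 2 < R := by
      by_contra hcon
      push Not at hcon
      nlinarith [mul_pos (sub_pos.2 hl2) (sub_pos.2 hl2)]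
    have hR1 : R < 1 := by
      by_contra hcon
      push Not at hcon
      nlinarith
    refine ⟨R, ?_, hR, hRl, hR1.le⟩
    rcases Nat.eq_zero_or_pos h with h0 | h0
    · subst h0
      have hlam : lamq q = 1 := by
        rw [hh]; unfold lamq
        norm_num
      have hrho : ∀ m, rho q m = 3 := by
        intro m
        rw [aux_rho q 0 hh]
        simp [Nat.mod_one]
      rw [hlam] at hR ⊢
      refine aux_conv 1 R 1 A (fun m => (1 - R) ^ m) ?_ ?_ ?_ ?_
      · intro m; exact pow_pos (by linarith) _
      · intro m; exact pow_le_one₀ (by linarith) (by linarith)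
      · simp [hA0]
      · intro m
        rw [hAs, hrho]
        push_cast
        simp only [pow_succ]
        linear_combination (1 - R) ^ m * hR
    · exact aux_main q h hh h0 R A hA0 hAs hl1 hR hR0 hR1
end
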